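/- arXiv:1804.02548 — 2 statements merged into one kernel-verified Lean document; each statement's English description precedes it below -/
import Mathlib

section
/- For integers p, q with 1 ≤ p < q, there exist constants C₁, C₂, D₁, D₂ > 0 such that for every element g of BS(p,q) written in its unique normal form g = w̃(a,t)·a^k (w̃ a freely reduced word over {t, at, …, a^{q−1}t, t⁻¹, at⁻¹, …, a^{p−1}t⁻¹}, k ∈ ℤ) one has C₁·(|w̃| + log(|k|+1)) − D₁ ≤ d_{\{a,t\}}(g) ≤ C₂·(|w̃| + log(|k|+1)) + D₂, where |w̃| is the number of blocks in w̃ and d_{\{a,t\}}(g) is the word length of g with respect to the generating set {a,t}. -/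
namespace CAG

/-- The convolution `w₁ ⊗ w₂` of two words, over the padded alphabet
`(Σ ∪ {⋄})²`, modelled as `Option α × Option α` where `none` is the padding symbol `⋄`. -/
def conv {α : Type*} : List α → List α → List (Option α × Option α)
  | [], [] => []
  | a :: as, [] => (some a, none) :: conv as []
  | [], b :: bs => (none, some b) :: conv [] bs
  | a :: as, b :: bs => (some a, some b) :: conv as bs

/-- A binary relation on words is regular if the language of convolutions of its pairs
is a regular language. -/
def IsRegularRel {α : Type*} (R : Set (List α × List α)) : Prop :=
  Language.IsRegular {w | ∃ p ∈ R, w = conv p.1 p.2}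

variable {G : Type*} [Group G]

/-- The alphabet `S = A ∪ A⁻¹` associated to a generating set `A ⊆ G`. -/
def Alph (A : Set G) : Type _ := {x : G // x ∈ A ∪ A⁻¹}

/-- The canonical evaluation map `π : S* → G`. -/
def eval (A : Set G) (w : List (Alph A)) : G := (w.map Subtype.val).prod

/-- The word length `d_A(g)` of `g` with respect to the generating set `A`. -/
noncomputable def wordLength (A : Set G) (g : G) : ℕ :=
  sInf {n | ∃ w : List (Alph A), eval A w = g ∧ w.length = n}

/-- The distance `d_A(g₁, g₂)` in the Cayley graph of `G` with respect to `A`. -/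
noncomputable def cayleyDist (A : Set G) (g₁ g₂ : G) : ℕ := wordLength A (g₁⁻¹ * g₂)

/-- `ψ : L → G` is a Cayley automatic representation of `G` (w.r.t. the
generating set `A`): `L ⊆ S*` is regular, `ψ` is a bijection from `L` onto `G`, and for every
`a ∈ A` the relation `R_a = {(ψ⁻¹(g), ψ⁻¹(g·a)) : g ∈ G}` is regular. -/
def IsCayleyAutomaticRep (A : Set G) (L : Language (Alph A)) (ψ : List (Alph A) → G) : Prop :=
  Language.IsRegular L ∧ Set.BijOn ψ L Set.univ ∧
    ∀ a ∈ A, IsRegularRel {p : List (Alph A) × List (Alph A) |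
      p.1 ∈ L ∧ p.2 ∈ L ∧ ψ p.2 = ψ p.1 * a}

/-- `G` is Cayley automatic with respect to the generating set `A`. -/
def IsCayleyAutomatic (A : Set G) : Prop :=
  ∃ (L : Language (Alph A)) (ψ : List (Alph A) → G), IsCayleyAutomaticRep A L ψ

/-- `G` is automatic (in the sense of Thurston) with respect to the generating set `A`:
there is a regular language `L ⊆ S*` on which the canonical evaluation map `π` is a bijection
onto `G` and all the relations `R_a`, `a ∈ A`, are regular. -/
def IsAutomatic (A : Set G) : Prop :=
  ∃ L : Language (Alph A), IsCayleyAutomaticRep A L (eval A)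

/-- The family `𝔉` of non-decreasing, non-negative real valued functions defined on a
final segment `[Q, ∞)` of `ℕ` (values below `Q` are irrelevant junk values). -/
structure FFun where
  Q : ℕ
  toFun : ℕ → ℝ
  nonneg : ∀ n, Q ≤ n → 0 ≤ toFun n
  mono : ∀ m n, Q ≤ m → m ≤ n → toFun m ≤ toFun n

/-- `h ⪯ f` : there are positive integers `K, M, N`, with `[N,∞)` contained in the domains of
`h` and `f`, such that `h(n) ≤ K·f(M·n)` for all `n ≥ N`. -/
def FFun.Preceq (h f : FFun) : Prop :=
  ∃ K M N : ℕ, 0 < K ∧ 0 < M ∧ 0 < N ∧ h.Q ≤ N ∧ f.Q ≤ N ∧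
    ∀ n, N ≤ n → h.toFun n ≤ K * f.toFun (M * n)

/-- `h ≍ f` iff `h ⪯ f` and `f ⪯ h`. -/
def FFun.Equiv (h f : FFun) : Prop := h.Preceq f ∧ f.Preceq h

/-- `h ≺ f` iff `h ⪯ f` and not `h ≍ f`. -/
def FFun.Prec (h f : FFun) : Prop := h.Preceq f ∧ ¬ h.Equiv f

/-- `G ∈ ℬ_f` with respect to the generating set `A`: there is a Cayley automatic
representation `ψ : L → G` such that the function
`h(n) = max{d_A(π(w), ψ(w)) : w ∈ L, |w| ≤ n}` satisfies `h ⪯ f`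
(stated equivalently: for some positive `K, M, N` with `N ≥ Q_f`, every `w ∈ L` with `|w| ≤ n`
and `n ≥ N` satisfies `d_A(π(w), ψ(w)) ≤ K·f(M·n)`). -/
def InB (A : Set G) (f : FFun) : Prop :=
  ∃ (L : Language (Alph A)) (ψ : List (Alph A) → G),
    IsCayleyAutomaticRep A L ψ ∧
    ∃ K M N : ℕ, 0 < K ∧ 0 < M ∧ 0 < N ∧ f.Q ≤ N ∧
      ∀ n, N ≤ n → ∀ w ∈ L, w.length ≤ n →
        (cayleyDist A (eval A w) (ψ w) : ℝ) ≤ K * f.toFun (M * n)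

/-- The identity function `𝔦(n) = n` as an element of `𝔉`. -/
def identF : FFun where
  Q := 1
  toFun n := n
  nonneg n _ := by positivity
  mono m n _ h := by simpa using (Nat.cast_le (α := ℝ)).mpr h

/-- The exponential function `𝔢(n) = exp n` as an element of `𝔉`. -/
noncomputable def expF : FFun where
  Q := 1
  toFun n := Real.exp n
  nonneg n _ := (Real.exp_pos n).le
  mono m n _ h := Real.exp_le_exp.mpr (by exact_mod_cast h)

end CAG
namespace CAG

/-- The defining relation of the Baumslag–Solitar group `BS(p,q) = ⟨a,t | t aᵖ t⁻¹ = a^q⟩`,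
with `a` the generator `0` and `t` the generator `1` of the free group on two generators. -/
def BSRels (p q : ℕ) : Set (FreeGroup (Fin 2)) :=
  {FreeGroup.of 1 * FreeGroup.of 0 ^ p * (FreeGroup.of 1)⁻¹ * (FreeGroup.of 0 ^ q)⁻¹}

/-- The Baumslag–Solitar group `BS(p,q) = ⟨a,t | t aᵖ t⁻¹ = a^q⟩`. -/
abbrev BS (p q : ℕ) := PresentedGroup (BSRels p q)

/-- The generator `a` of `BS(p,q)`. -/
def BS.a (p q : ℕ) : BS p q := PresentedGroup.of 0

/-- The generator `t` of `BS(p,q)`. -/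
def BS.t (p q : ℕ) : BS p q := PresentedGroup.of 1

/-- The alphabet of blocks `{t, at, …, a^{q-1}t, t⁻¹, at⁻¹, …, a^{p-1}t⁻¹}`:
`.inl i` stands for `aⁱt` (`0 ≤ i < q`) and `.inr j` stands for `aʲt⁻¹` (`0 ≤ j < p`). -/
abbrev BSBlock (p q : ℕ) := Fin q ⊕ Fin p

/-- The word in the letters `a, t` (elements of `Fin 2 × Bool`, the letter `(x, b)` standing
for `x` if `b = true` and `x⁻¹` if `b = false`) spelled by a single block. -/
def BSBlock.letters {p q : ℕ} : BSBlock p q → List (Fin 2 × Bool)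
  | .inl i => List.replicate i.val ((0 : Fin 2), true) ++ [((1 : Fin 2), true)]
  | .inr j => List.replicate j.val ((0 : Fin 2), true) ++ [((1 : Fin 2), false)]

/-- The word in the letters `a, t` spelled by a sequence of blocks. -/
def BSBlockWord {p q : ℕ} (bs : List (BSBlock p q)) : List (Fin 2 × Bool) :=
  (bs.map BSBlock.letters).flatten

/-- A sequence of blocks is freely reduced if the word in `a, t` it spells is freely
reduced, i.e. it contains no subword `x x⁻¹` or `x⁻¹ x`. -/
def BSFreelyReduced {p q : ℕ} (bs : List (BSBlock p q)) : Prop :=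
  FreeGroup.reduce (BSBlockWord bs) = BSBlockWord bs

/-- The element of `BS(p,q)` represented by a single block. -/
def BSBlock.elem {p q : ℕ} : BSBlock p q → BS p q
  | .inl i => BS.a p q ^ i.val * BS.t p q
  | .inr j => BS.a p q ^ j.val * (BS.t p q)⁻¹

end CAG

/-!
Lower bound: `BS(p,q)` acts on normal forms from the right. Writing `k = mq + i` with `0 ≤ i < q`,
`w̃ aᵏ t = (w̃ aⁱ t) aᵐᵖ`, so a generator adds at most one block and multiplies `|k| + 1` by at most
`p + q`. Hence `|w̃| + log (|k| + 1)` grows by at most a constant along each edge of the Cayley graph.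

Upper bound: each block is a short word, and for `k = mq + i` one has `aᵏ = aⁱ t aᵐᵖ t⁻¹`. As
`p < q`, this shrinks the exponent by a definite factor at bounded cost, so `aᵏ` is reached in
`O(log k)` steps.
-/

namespace CAG

section WordLength

variable {G : Type*} [Group G] {A : Set G}

lemma eval_nil : eval A [] = 1 := rfl

lemma eval_cons (x : Alph A) (w : List (Alph A)) : eval A (x :: w) = x.1 * eval A w :=
  List.prod_cons

lemma eval_append (v w : List (Alph A)) : eval A (v ++ w) = eval A v * eval A w := by
  induction v with
  | nil => exact (one_mul _).symm
  | cons x v ih => rw [List.cons_append, eval_cons, eval_cons, ih, mul_assoc]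

lemma exists_eval_eq_inv (w : List (Alph A)) :
    ∃ v : List (Alph A), eval A v = (eval A w)⁻¹ ∧ v.length = w.length := by
  induction w with
  | nil => exact ⟨[], inv_one.symm, rfl⟩
  | cons x w ih =>
    obtain ⟨v, hv, hlen⟩ := ih
    let y : Alph A := ⟨x.1⁻¹, by simpa [or_comm] using x.2⟩
    refine ⟨v ++ [y], ?_, by simp [hlen]⟩
    rw [eval_append, eval_cons, eval_cons, eval_nil, mul_one, hv, mul_inv_rev]

lemma exists_eval_eq_of_mem_closure {g : G} (hg : g ∈ Subgroup.closure A) :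
    ∃ w : List (Alph A), eval A w = g := by
  rw [← Subgroup.mem_toSubmonoid, Subgroup.closure_toSubmonoid] at hg
  obtain ⟨l, hl, rfl⟩ := Submonoid.exists_list_of_mem_closure hg
  lift l to List {x // x ∈ A ∪ A⁻¹} using hl
  exact ⟨l, rfl⟩

lemma wordLength_eval_le (w : List (Alph A)) : wordLength A (eval A w) ≤ w.length :=
  Nat.sInf_le ⟨w, rfl, rfl⟩

lemma exists_length_eq_wordLength {g : G} (hg : g ∈ Subgroup.closure A) :
    ∃ w : List (Alph A), eval A w = g ∧ w.length = wordLength A g := by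
  obtain ⟨w, hw⟩ := exists_eval_eq_of_mem_closure hg
  exact Nat.sInf_mem (s := {n | ∃ w : List (Alph A), eval A w = g ∧ w.length = n})
    ⟨w.length, w, hw, rfl⟩

lemma wordLength_one : wordLength A 1 = 0 :=
  Nat.le_zero.1 (wordLength_eval_le [])

lemma wordLength_le_one {g : G} (hg : g ∈ A) : wordLength A g ≤ 1 := by
  let x : Alph A := ⟨g, Or.inl hg⟩
  have hx : eval A [x] = g := mul_one g
  simpa [hx] using wordLength_eval_le [x]

lemma wordLength_inv (g : G) : wordLength A g⁻¹ = wordLength A g := by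
  refine congrArg sInf (Set.ext fun n ↦ ⟨?_, ?_⟩) <;> rintro ⟨w, hw, rfl⟩ <;>
    obtain ⟨v, hv, hlen⟩ := exists_eval_eq_inv w
  · exact ⟨v, by rw [hv, hw, inv_inv], hlen⟩
  · exact ⟨v, by rw [hv, hw], hlen⟩

lemma wordLength_mul_le {g h : G} (hg : g ∈ Subgroup.closure A) (hh : h ∈ Subgroup.closure A) :
    wordLength A (g * h) ≤ wordLength A g + wordLength A h := by
  obtain ⟨v, rfl, hv⟩ := exists_length_eq_wordLength hg
  obtain ⟨w, rfl, hw⟩ := exists_length_eq_wordLength hh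
  rw [← hv, ← hw, ← eval_append, ← List.length_append]
  exact wordLength_eval_le _

lemma wordLength_prod_le {l : List G} {c : ℕ} (hl : ∀ g ∈ l, g ∈ Subgroup.closure A)
    (hc : ∀ g ∈ l, wordLength A g ≤ c) : wordLength A l.prod ≤ c * l.length := by
  induction l with
  | nil => simp [wordLength_one]
  | cons g l ih =>
    simp only [List.forall_mem_cons] at hl hc
    calc wordLength A (g :: l).prod
        ≤ wordLength A g + wordLength A l.prod := by
          rw [List.prod_cons]
          exact wordLength_mul_le hl.1 (list_prod_mem hl.2)
      _ ≤ c + c * l.length := Nat.add_le_add hc.1 (ih hl.2 hc.2)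
      _ = c * (g :: l).length := by rw [List.length_cons]; ring

lemma wordLength_pow_le {g : G} (hg : g ∈ A) (n : ℕ) : wordLength A (g ^ n) ≤ n := by
  simpa using wordLength_prod_le (l := List.replicate n g) (c := 1)
    (fun x hx ↦ List.eq_of_mem_replicate hx ▸ Subgroup.subset_closure hg)
    (fun x hx ↦ List.eq_of_mem_replicate hx ▸ wordLength_le_one hg)

lemma le_add_nsmul_wordLength {M : Type*} [AddCommMonoid M] [PartialOrder M]
    [IsOrderedAddMonoid M] {f : G → M} {c : M} (hf : ∀ g, ∀ s ∈ A ∪ A⁻¹, f (g * s) ≤ f g + c)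
    {g : G} (hg : g ∈ Subgroup.closure A) : f g ≤ f 1 + wordLength A g • c := by
  obtain ⟨w, hw, hlen⟩ := exists_length_eq_wordLength hg
  suffices ∀ h, f (h * eval A w) ≤ f h + w.length • c by simpa [hw, hlen] using this 1
  clear hw hlen
  intro h
  induction w generalizing h with
  | nil => simp [eval_nil]
  | cons x w ih =>
    calc f (h * eval A (x :: w))
        = f (h * x.1 * eval A w) := by rw [eval_cons, mul_assoc]
      _ ≤ f (h * x.1) + w.length • c := ih _
      _ ≤ f h + c + w.length • c := by gcongr; exact hf h x.1 x.2
      _ = f h + (x :: w).length • c := by rw [List.length_cons, succ_nsmul', add_assoc]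

end WordLength

lemma le_add_mul_log_of_contraction {f : ℕ → ℝ} {b c r : ℝ} (hr : 1 < r) (hc : 0 ≤ c)
    (hf : ∀ k, f k ≤ b ∨ ∃ m : ℕ, r * (m + 1) ≤ k + 1 ∧ f k ≤ f m + c) (k : ℕ) :
    f k ≤ b + c / Real.log r * Real.log (k + 1) := by
  have hlog : 0 < Real.log r := Real.log_pos hr
  induction k using Nat.strong_induction_on with
  | _ k ih =>
    rcases hf k with hk | ⟨m, hm, hk⟩
    · have : 0 ≤ Real.log ((k : ℝ) + 1) := Real.log_nonneg (by simp)
      exact hk.trans (le_add_of_nonneg_right (by positivity))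
    · have hmk : m < k := by
        have : (m : ℝ) < k := by nlinarith
        exact_mod_cast this
      have hlog_le : Real.log r + Real.log (m + 1) ≤ Real.log (k + 1) := by
        rw [← Real.log_mul (by positivity) (by positivity)]
        exact Real.log_le_log (by positivity) hm
      calc f k ≤ b + c / Real.log r * Real.log (m + 1) + c := hk.trans (by gcongr; exact ih m hmk)
        _ = b + c / Real.log r * (Real.log r + Real.log (m + 1)) := by field_simp; ring
        _ ≤ b + c / Real.log r * Real.log (k + 1) := by gcongr

lemma exists_eq_mul_add_fin (n : ℕ) [NeZero n] (k : ℤ) : ∃ (m : ℤ) (i : Fin n), k = m * n + i :=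
  ⟨_, _, ((Int.divModEquiv n).symm_apply_apply k).symm⟩

lemma abs_mul_add_fin_lt {p q : ℕ} (m : ℤ) (i : Fin q) (j : Fin p) :
    |m * p + j| < p * (|m * q + i| + 1) := by
  have hq : (1 : ℤ) ≤ q := by have := i.pos; lia
  have hi : (i : ℤ) < q := by exact_mod_cast i.2
  have hj : (j : ℤ) < p := by exact_mod_cast j.2
  have hm : |m| ≤ |m * q + i| := by
    rcases le_or_gt 0 m with h | h
    · rw [abs_of_nonneg h, abs_of_nonneg (by positivity)]
      nlinarith
    · rw [abs_of_neg h, abs_of_neg (by nlinarith)]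
      nlinarith
  calc |m * p + j| ≤ |m * p| + |(j : ℤ)| := abs_add_le _ _
    _ = |m| * p + j := by rw [abs_mul, Nat.abs_cast, Nat.abs_cast]
    _ < p * (|m| + 1) := by linarith
    _ ≤ p * (|m * q + i| + 1) := by gcongr

section NormalForm

variable {p q : ℕ}

/-- `BSBlock.Follows b c` says that the block `b` may directly follow the block `c` in a freely
reduced word: the last letter of `c` does not cancel against the first letter of `b`. -/
def BSBlock.Follows : BSBlock p q → BSBlock p q → Prop
  | .inl i, .inr _ => i.val ≠ 0
  | .inr j, .inl _ => j.val ≠ 0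
  | .inl _, .inl _ => True
  | .inr _, .inr _ => True

lemma BSBlock.letters_ne_nil (b : BSBlock p q) : b.letters ≠ [] := by
  rcases b with i | j <;> exact List.append_ne_nil_of_right_ne_nil _ (List.cons_ne_nil _ _)

lemma BSFreelyReduced.isChain_reverse {bs : List (BSBlock p q)} (h : BSFreelyReduced bs) :
    bs.reverse.IsChain BSBlock.Follows := by
  have hnil : [] ∉ bs.map BSBlock.letters := fun hmem ↦ by
    obtain ⟨b, -, hb⟩ := List.mem_map.1 hmem
    exact b.letters_ne_nil hb
  rw [BSFreelyReduced, ← FreeGroup.isReduced_iff_reduce_eq, FreeGroup.IsReduced, BSBlockWord,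
    List.isChain_flatten hnil, List.isChain_map] at h
  refine List.isChain_reverse.2 (h.2.imp fun c b hcb ↦ ?_)
  rcases c with i | j <;> rcases b with i' | j'
  · trivial
  · intro h0
    simp [BSBlock.letters, h0] at hcb
  · intro h0
    simp [BSBlock.letters, h0] at hcb
  · trivial

/-- The freely reduced words of blocks of `BS(p,q)`. The list is reversed, so that its head is the
last block, on which right multiplication acts. -/
abbrev ReducedWord (p q : ℕ) := {l : List (BSBlock p q) // l.IsChain BSBlock.Follows}

/-- The normal forms `w̃ aᵏ` of elements of `BS(p,q)`, as pairs `(w̃, k)`. -/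
abbrev NormalForm (p q : ℕ) := ReducedWord p q × ℤ

namespace ReducedWord

section MulT

variable [NeZero p]

/-- Right multiplication by `t` on the words `w̃ aⁱ`, `0 ≤ i < q`. The product is again of the form
`w̃' aʲ`, with `0 ≤ j < p`. -/
def mulT : ReducedWord p q × Fin q → ReducedWord p q × Fin p
  | (⟨[], _⟩, i) => (⟨[.inl i], List.isChain_singleton _⟩, 0)
  | (⟨.inl i' :: l, h⟩, i) => (⟨.inl i :: .inl i' :: l, h.cons_cons trivial⟩, 0)
  | (⟨.inr j :: l, h⟩, i) =>
    if hi : i.val = 0 then (⟨l, h.tail⟩, j) else (⟨.inl i :: .inr j :: l, h.cons_cons hi⟩, 0)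

lemma mulT_of_isChain {i : Fin q} {l : List (BSBlock p q)}
    (h : (.inl i :: l).IsChain BSBlock.Follows) :
    mulT (⟨l, h.tail⟩, i) = (⟨.inl i :: l, h⟩, 0) := by
  rcases l with _ | ⟨_ | _, l⟩
  · rfl
  · rfl
  · exact dif_neg (List.isChain_cons_cons.1 h).1

lemma length_mulT_le (x : ReducedWord p q × Fin q) :
    (mulT x).1.1.length ≤ x.1.1.length + 1 := by
  rcases x with ⟨⟨_ | ⟨_ | _, l⟩, h⟩, i⟩
  · rfl
  · rfl
  · simp only [mulT]
    split_ifs <;> simp only [List.length_cons] <;> lia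

end MulT

section MulTInv

variable [NeZero q]

/-- Right multiplication by `t⁻¹` on the words `w̃ aʲ`, `0 ≤ j < p`. The product is again of the
form `w̃' aⁱ`, with `0 ≤ i < q`. -/
def mulTInv : ReducedWord p q × Fin p → ReducedWord p q × Fin q
  | (⟨[], _⟩, j) => (⟨[.inr j], List.isChain_singleton _⟩, 0)
  | (⟨.inl i :: l, h⟩, j) =>
    if hj : j.val = 0 then (⟨l, h.tail⟩, i) else (⟨.inr j :: .inl i :: l, h.cons_cons hj⟩, 0)
  | (⟨.inr j' :: l, h⟩, j) => (⟨.inr j :: .inr j' :: l, h.cons_cons trivial⟩, 0)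

lemma mulTInv_of_isChain {j : Fin p} {l : List (BSBlock p q)}
    (h : (.inr j :: l).IsChain BSBlock.Follows) :
    mulTInv (⟨l, h.tail⟩, j) = (⟨.inr j :: l, h⟩, 0) := by
  rcases l with _ | ⟨_ | _, l⟩
  · rfl
  · exact dif_neg (List.isChain_cons_cons.1 h).1
  · rfl

lemma length_mulTInv_le (x : ReducedWord p q × Fin p) :
    (mulTInv x).1.1.length ≤ x.1.1.length + 1 := by
  rcases x with ⟨⟨_ | ⟨_ | _, l⟩, h⟩, j⟩
  · rfl
  · simp only [mulTInv]
    split_ifs <;> simp only [List.length_cons] <;> lia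
  · rfl

end MulTInv

variable [NeZero p] [NeZero q]

/-- Right multiplication by `t` as a bijection between the words `w̃ aⁱ`, `0 ≤ i < q`, and the words
`w̃ aʲ`, `0 ≤ j < p`. -/
def equivMulT : ReducedWord p q × Fin q ≃ ReducedWord p q × Fin p where
  toFun := mulT
  invFun := mulTInv
  left_inv := by
    rintro ⟨⟨_ | ⟨i' | j, l⟩, h⟩, i⟩
    · simp [mulT, mulTInv]
    · simp [mulT, mulTInv]
    · by_cases hi : i = 0
      · simpa [mulT, hi] using mulTInv_of_isChain h
      · simp [mulT, mulTInv, hi]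
  right_inv := by
    rintro ⟨⟨_ | ⟨i | j', l⟩, h⟩, j⟩
    · simp [mulT, mulTInv]
    · by_cases hj : j = 0
      · simpa [mulTInv, hj] using mulT_of_isChain h
      · simp [mulT, mulTInv, hj]
    · simp [mulT, mulTInv]

end ReducedWord

namespace NormalForm

/-- Right multiplication by `a`. -/
def mulA : Equiv.Perm (NormalForm p q) :=
  (Equiv.refl _).prodCongr (Equiv.addRight 1)

lemma mulA_zpow_apply (x : NormalForm p q) (n : ℤ) : (mulA ^ n) x = (x.1, x.2 + n) := by
  induction n generalizing x with
  | zero => simp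
  | succ n ih =>
    rw [zpow_add_one, Equiv.Perm.mul_apply, ih]
    simp [mulA, add_comm, add_left_comm]
  | pred n ih =>
    rw [zpow_sub_one, Equiv.Perm.mul_apply, ih]
    simp [mulA, sub_eq_add_neg, add_comm, add_left_comm]

/-- The quantity `|w̃| + log (|k| + 1)` of a normal form `w̃ aᵏ`, to be compared with the word
length. -/
noncomputable def size (x : NormalForm p q) : ℝ := x.1.1.length + Real.log (|x.2| + 1)

lemma size_le_size_add {x y : NormalForm p q} {c : ℕ} (hlen : y.1.1.length ≤ x.1.1.length + 1)
    (habs : |y.2| < c * (|x.2| + 1)) : y.size ≤ x.size + (1 + Real.log c) := by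
  have hc : (c : ℝ) ≠ 0 := by
    rintro hc
    simp [Nat.cast_eq_zero.1 hc, (abs_nonneg _).not_gt] at habs
  have hlog : Real.log (|y.2| + 1) ≤ Real.log c + Real.log (|x.2| + 1) := by
    rw [← Real.log_mul hc (by positivity)]
    exact Real.log_le_log (by positivity) (by exact_mod_cast habs)
  have hlen' : (y.1.1.length : ℝ) ≤ x.1.1.length + 1 := by exact_mod_cast hlen
  unfold size
  linarith

lemma size_mulA_zpow_le [NeZero p] [NeZero q] (x : NormalForm p q) {n : ℤ} (hn : |n| ≤ 1) :
    ((mulA ^ n) x).size ≤ x.size + (1 + Real.log (p + q : ℕ)) := by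
  rw [mulA_zpow_apply]
  refine size_le_size_add (Nat.le_succ _) ?_
  have hp : 0 < p := Nat.pos_of_neZero p
  have hq : 0 < q := Nat.pos_of_neZero q
  have hpq : (2 : ℤ) ≤ (p + q : ℕ) := by lia
  calc |x.2 + n| ≤ |x.2| + |n| := abs_add_le _ _
    _ < 2 * (|x.2| + 1) := by linarith [abs_nonneg x.2]
    _ ≤ (p + q : ℕ) * (|x.2| + 1) := by gcongr

/-- The normal form `w̃ aᵏ` with `k = mn + i` is read as `(w̃ aⁱ) a^{mn}`. -/
def splitExponent (n : ℕ) [NeZero n] : NormalForm p q ≃ (ReducedWord p q × Fin n) × ℤ :=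
  ((Equiv.refl _).prodCongr ((Int.divModEquiv n).trans (Equiv.prodComm _ _))).trans
    (Equiv.prodAssoc _ _ _).symm

lemma splitExponent_mul_add {n : ℕ} [NeZero n] (w : ReducedWord p q) (m : ℤ) (i : Fin n) :
    splitExponent n (w, m * n + i) = ((w, i), m) :=
  (splitExponent n).apply_symm_apply ((w, i), m)

variable [NeZero p] [NeZero q]

/-- Right multiplication by `t`, using `w̃ a^{mq+i} t = (w̃ aⁱ t) a^{mp}`. -/
def mulT : Equiv.Perm (NormalForm p q) :=
  (splitExponent q).trans
    ((ReducedWord.equivMulT.prodCongr (Equiv.refl ℤ)).trans (splitExponent p).symm)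

lemma mulT_apply (w : ReducedWord p q) (m : ℤ) (i : Fin q) :
    mulT (w, m * q + i) =
      ((ReducedWord.mulT (w, i)).1, m * p + (ReducedWord.mulT (w, i)).2) := by
  simp only [mulT, Equiv.trans_apply, splitExponent_mul_add]
  rfl

lemma mulT_symm_apply (w : ReducedWord p q) (m : ℤ) (j : Fin p) :
    mulT.symm (w, m * p + j) =
      ((ReducedWord.mulTInv (w, j)).1, m * q + (ReducedWord.mulTInv (w, j)).2) := by
  simp only [mulT, Equiv.symm_trans_apply, Equiv.symm_symm, splitExponent_mul_add]
  rfl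

lemma mulT_mul_mulA_pow : mulT * mulA ^ q = mulA ^ p * (mulT : Equiv.Perm (NormalForm p q)) := by
  ext1 ⟨w, k⟩
  obtain ⟨m, i, rfl⟩ := exists_eq_mul_add_fin q k
  have hadd : m * q + i + q = (m + 1) * q + (i : ℤ) := by ring
  simp only [← zpow_natCast, Equiv.Perm.mul_apply, mulA_zpow_apply, hadd, mulT_apply]
  congr 1
  ring

lemma size_mulT_le (x : NormalForm p q) :
    (mulT x).size ≤ x.size + (1 + Real.log (p + q : ℕ)) := by
  obtain ⟨w, k⟩ := x
  obtain ⟨m, i, rfl⟩ := exists_eq_mul_add_fin q k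
  rw [mulT_apply]
  refine size_le_size_add (ReducedWord.length_mulT_le _) ((abs_mul_add_fin_lt m i _).trans_le ?_)
  gcongr
  lia

lemma size_mulT_symm_le (x : NormalForm p q) :
    (mulT.symm x).size ≤ x.size + (1 + Real.log (p + q : ℕ)) := by
  obtain ⟨w, k⟩ := x
  obtain ⟨m, j, rfl⟩ := exists_eq_mul_add_fin p k
  rw [mulT_symm_apply]
  refine size_le_size_add (ReducedWord.length_mulTInv_le _)
    ((abs_mul_add_fin_lt m j _).trans_le ?_)
  gcongr
  lia

end NormalForm

end NormalForm

namespace BS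

variable {p q : ℕ}

/-- The standard generating set `{a, t}` of `BS(p,q)`. -/
abbrev generators (p q : ℕ) : Set (BS p q) := {a p q, t p q}

lemma a_mem_generators : a p q ∈ generators p q := Set.mem_insert _ _

lemma t_mem_generators : t p q ∈ generators p q := Set.mem_insert_of_mem _ rfl

lemma mem_closure_generators (g : BS p q) : g ∈ Subgroup.closure (generators p q) := by
  refine PresentedGroup.generated_by _ _ (fun i ↦ Subgroup.subset_closure ?_) g
  fin_cases i
  · exact a_mem_generators
  · exact t_mem_generators

lemma t_mul_a_pow_mul_t_inv (m : ℕ) : t p q * a p q ^ (p * m) * (t p q)⁻¹ = a p q ^ (q * m) := by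
  have hrel : t p q * a p q ^ p * (t p q)⁻¹ = a p q ^ q :=
    mul_inv_eq_one.1 (PresentedGroup.one_of_mem (rels := BSRels p q) rfl)
  rw [pow_mul, pow_mul, ← hrel, conj_pow]

section LowerBound

variable [NeZero p] [NeZero q]

/-- The right action of `BS(p,q)` on normal forms, encoded as a homomorphism to the opposite of the
group of permutations. -/
def rightAction (p q : ℕ) [NeZero p] [NeZero q] : BS p q →* (Equiv.Perm (NormalForm p q))ᵐᵒᵖ :=
  PresentedGroup.toGroup
    (f := ![MulOpposite.op NormalForm.mulA, MulOpposite.op NormalForm.mulT]) <| by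
    rintro r rfl
    have h := congrArg MulOpposite.op (NormalForm.mulT_mul_mulA_pow (p := p) (q := q))
    simpa only [MulOpposite.op_mul, MulOpposite.op_pow, map_mul, map_inv, map_pow,
      FreeGroup.lift_apply_of, Matrix.cons_val_zero, Matrix.cons_val_one, mul_inv_eq_one,
      mul_inv_eq_iff_eq_mul, one_mul] using h.symm

/-- The normal form of `g`, obtained by letting `g` act on the normal form of `1`. -/
def normalForm (g : BS p q) : NormalForm p q :=
  (rightAction p q g).unop (⟨[], List.isChain_nil⟩, 0)

lemma normalForm_one : normalForm (1 : BS p q) = (⟨[], List.isChain_nil⟩, 0) := by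
  simp [normalForm]

lemma normalForm_mul_a_zpow (g : BS p q) (k : ℤ) :
    normalForm (g * a p q ^ k) = (NormalForm.mulA ^ k) (normalForm g) := by
  simp [normalForm, rightAction, a]

lemma normalForm_mul_t (g : BS p q) : normalForm (g * t p q) = NormalForm.mulT (normalForm g) := by
  simp [normalForm, rightAction, t]

lemma normalForm_mul_t_inv (g : BS p q) :
    normalForm (g * (t p q)⁻¹) = NormalForm.mulT.symm (normalForm g) := by
  simp [normalForm, rightAction, t]

lemma normalForm_mul_elem {g : BS p q} {b : BSBlock p q} {l : List (BSBlock p q)}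
    (h : (b :: l).IsChain BSBlock.Follows) (hg : normalForm g = (⟨l, h.tail⟩, 0)) :
    normalForm (g * b.elem) = (⟨b :: l, h⟩, 0) := by
  rcases b with i | j
  · have hmul := NormalForm.mulT_apply ⟨l, h.tail⟩ 0 i
    rw [ReducedWord.mulT_of_isChain h] at hmul
    rw [BSBlock.elem, ← mul_assoc, normalForm_mul_t, ← zpow_natCast, normalForm_mul_a_zpow, hg,
      NormalForm.mulA_zpow_apply]
    simpa using hmul
  · have hmul := NormalForm.mulT_symm_apply ⟨l, h.tail⟩ 0 j
    rw [ReducedWord.mulTInv_of_isChain h] at hmul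
    rw [BSBlock.elem, ← mul_assoc, normalForm_mul_t_inv, ← zpow_natCast, normalForm_mul_a_zpow, hg,
      NormalForm.mulA_zpow_apply]
    simpa using hmul

lemma normalForm_prod_elem (w : ReducedWord p q) :
    normalForm (w.1.reverse.map BSBlock.elem).prod = (w, 0) := by
  obtain ⟨l, h⟩ := w
  induction l with
  | nil => exact normalForm_one
  | cons b l ih => simpa using normalForm_mul_elem h (ih h.tail)

lemma normalForm_prod_elem_mul_a_zpow {bs : List (BSBlock p q)} (h : BSFreelyReduced bs) (k : ℤ) :
    normalForm ((bs.map BSBlock.elem).prod * a p q ^ k) = (⟨bs.reverse, h.isChain_reverse⟩, k) := by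
  have hprod := normalForm_prod_elem ⟨bs.reverse, h.isChain_reverse⟩
  rw [List.reverse_reverse] at hprod
  rw [normalForm_mul_a_zpow, hprod, NormalForm.mulA_zpow_apply, zero_add]

lemma size_normalForm_mul_le (g : BS p q) {s : BS p q}
    (hs : s ∈ generators p q ∪ (generators p q)⁻¹) :
    (normalForm (g * s)).size ≤ (normalForm g).size + (1 + Real.log (p + q : ℕ)) := by
  simp only [Set.mem_union, Set.mem_inv, Set.mem_insert_iff, Set.mem_singleton_iff,
    inv_eq_iff_eq_inv] at hs
  rcases hs with (rfl | rfl) | (rfl | rfl)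
  · rw [← zpow_one (a p q), normalForm_mul_a_zpow]
    exact NormalForm.size_mulA_zpow_le _ abs_one.le
  · rw [normalForm_mul_t]
    exact NormalForm.size_mulT_le _
  · rw [← zpow_neg_one, normalForm_mul_a_zpow]
    exact NormalForm.size_mulA_zpow_le _ (abs_neg _ |>.trans_le abs_one.le)
  · rw [normalForm_mul_t_inv]
    exact NormalForm.size_mulT_symm_le _

lemma size_normalForm_le (g : BS p q) :
    (normalForm g).size ≤ (1 + Real.log (p + q : ℕ)) * wordLength (generators p q) g := by
  have h := le_add_nsmul_wordLength (f := fun g ↦ (normalForm g).size)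
    (fun g _ hs ↦ size_normalForm_mul_le g hs) (mem_closure_generators g)
  have hone : (normalForm (1 : BS p q)).size = 0 := by simp [normalForm_one, NormalForm.size]
  rwa [hone, zero_add, nsmul_eq_mul, mul_comm] at h

end LowerBound

lemma wordLength_elem_le (b : BSBlock p q) :
    wordLength (generators p q) b.elem ≤ max p q := by
  have ht : wordLength (generators p q) (t p q) ≤ 1 := wordLength_le_one t_mem_generators
  rcases b with i | j
  · calc wordLength (generators p q) (a p q ^ i.val * t p q)
        ≤ i + 1 := (wordLength_mul_le (mem_closure_generators _) (mem_closure_generators _)).trans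
          (Nat.add_le_add (wordLength_pow_le a_mem_generators _) ht)
      _ ≤ max p q := by lia
  · calc wordLength (generators p q) (a p q ^ j.val * (t p q)⁻¹)
        ≤ j + 1 := (wordLength_mul_le (mem_closure_generators _) (mem_closure_generators _)).trans
          (Nat.add_le_add (wordLength_pow_le a_mem_generators _) ((wordLength_inv _).trans_le ht))
      _ ≤ max p q := by lia

lemma wordLength_prod_elem_le (bs : List (BSBlock p q)) :
    wordLength (generators p q) (bs.map BSBlock.elem).prod ≤ max p q * bs.length := by
  refine (wordLength_prod_le (c := max p q) (fun _ _ ↦ mem_closure_generators _) ?_).trans_eq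
    (by rw [List.length_map])
  exact List.forall_mem_map.2 fun b _ ↦ wordLength_elem_le b

lemma wordLength_a_pow_le_add (hq : 0 < q) (k : ℕ) :
    wordLength (generators p q) (a p q ^ k) ≤
      wordLength (generators p q) (a p q ^ (p * (k / q))) + (q + 1) := by
  have hk : a p q ^ k = a p q ^ (k % q) * (t p q * a p q ^ (p * (k / q)) * (t p q)⁻¹) := by
    rw [t_mul_a_pow_mul_t_inv, ← pow_add, Nat.mod_add_div]
  have ht : wordLength (generators p q) (t p q) ≤ 1 := wordLength_le_one t_mem_generators
  have ht' : wordLength (generators p q) (t p q)⁻¹ ≤ 1 := (wordLength_inv _).trans_le ht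
  have hmod : wordLength (generators p q) (a p q ^ (k % q)) ≤ k % q :=
    wordLength_pow_le a_mem_generators _
  have hmul (g h : BS p q) : wordLength (generators p q) (g * h) ≤
      wordLength (generators p q) g + wordLength (generators p q) h :=
    wordLength_mul_le (mem_closure_generators g) (mem_closure_generators h)
  have hlt : k % q < q := Nat.mod_lt k hq
  rw [hk]
  grw [hmul, hmul, hmul, hmod, ht, ht']
  lia

lemma one_lt_succ_div_succ (hpq : p < q) : 1 < (q + 1 : ℝ) / (p + 1) := by
  rw [one_lt_div (by positivity)]
  gcongr

lemma succ_div_succ_mul_succ_le_succ (hpq : p < q) {k : ℕ} (hk : q ≤ k) :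
    ((q + 1 : ℝ) / (p + 1)) * ((p * (k / q) : ℕ) + 1) ≤ k + 1 := by
  have hdiv : 1 ≤ k / q := (Nat.one_le_div_iff (by lia)).2 hk
  have hle : q * (k / q) ≤ k := Nat.mul_div_le k q
  rw [div_mul_eq_mul_div, div_le_iff₀ (by positivity)]
  suffices (q + 1) * (p * (k / q) + 1) ≤ (k + 1) * (p + 1) by exact_mod_cast this
  nlinarith

lemma wordLength_a_pow_le (hpq : p < q) (k : ℕ) :
    (wordLength (generators p q) (a p q ^ k) : ℝ) ≤
      q + (q + 1) / Real.log ((q + 1) / (p + 1)) * Real.log (k + 1) := by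
  refine le_add_mul_log_of_contraction
    (f := fun k ↦ (wordLength (generators p q) (a p q ^ k) : ℝ)) (one_lt_succ_div_succ hpq)
    (by positivity) (fun k ↦ ?_) k
  rcases le_or_gt k q with hk | hk
  · exact .inl (by exact_mod_cast (wordLength_pow_le a_mem_generators k).trans hk)
  · exact .inr ⟨p * (k / q), succ_div_succ_mul_succ_le_succ hpq hk.le,
      by exact_mod_cast wordLength_a_pow_le_add (by lia) k⟩

lemma wordLength_a_zpow (k : ℤ) :
    wordLength (generators p q) (a p q ^ k) = wordLength (generators p q) (a p q ^ k.natAbs) := by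
  obtain ⟨n, rfl | rfl⟩ := k.eq_nat_or_neg <;> simp [wordLength_inv]

lemma wordLength_prod_elem_mul_a_zpow_le (hpq : p < q) (bs : List (BSBlock p q)) (k : ℤ) :
    (wordLength (generators p q) ((bs.map BSBlock.elem).prod * a p q ^ k) : ℝ) ≤
      q * bs.length +
        (q + (q + 1) / Real.log ((q + 1) / (p + 1)) * Real.log (|k| + 1)) := by
  have hmul : wordLength (generators p q) ((bs.map BSBlock.elem).prod * a p q ^ k) ≤
      q * bs.length + wordLength (generators p q) (a p q ^ k.natAbs) := by
    have hprod := wordLength_prod_elem_le bs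
    rw [max_eq_right hpq.le] at hprod
    rw [← wordLength_a_zpow]
    exact (wordLength_mul_le (mem_closure_generators _) (mem_closure_generators _)).trans
      (Nat.add_le_add_right hprod _)
  have hpow := wordLength_a_pow_le hpq k.natAbs
  rw [Nat.cast_natAbs] at hpow
  have hmul' : (wordLength (generators p q) ((bs.map BSBlock.elem).prod * a p q ^ k) : ℝ) ≤
      q * bs.length + wordLength (generators p q) (a p q ^ k.natAbs) := by exact_mod_cast hmul
  exact hmul'.trans (by gcongr)

end BS

end CAG

open CAG in
/-- Metric estimates for `BS(p,q)`, `1 ≤ p < q` (Burillo–Elder): there are constants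
`C₁, C₂, D₁, D₂ > 0` such that for every `g ∈ BS(p,q)` with normal form `g = w̃(a,t)·aᵏ`
(`w̃` a freely reduced word of blocks, `k ∈ ℤ`),
`C₁·(|w̃| + log(|k|+1)) − D₁ ≤ d_{{a,t}}(g) ≤ C₂·(|w̃| + log(|k|+1)) + D₂`. -/
theorem BS_metric_estimates (p q : ℕ) (hp : 1 ≤ p) (hpq : p < q) :
    ∃ C₁ C₂ D₁ D₂ : ℝ, 0 < C₁ ∧ 0 < C₂ ∧ 0 < D₁ ∧ 0 < D₂ ∧
      ∀ (g : BS p q) (bs : List (BSBlock p q)) (k : ℤ),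
        BSFreelyReduced bs → g = (bs.map BSBlock.elem).prod * BS.a p q ^ k →
          C₁ * (bs.length + Real.log (|k| + 1)) - D₁ ≤
              (wordLength ({BS.a p q, BS.t p q} : Set (BS p q)) g : ℝ) ∧
            (wordLength ({BS.a p q, BS.t p q} : Set (BS p q)) g : ℝ) ≤
              C₂ * (bs.length + Real.log (|k| + 1)) + D₂ := by
  have : NeZero p := ⟨by lia⟩
  have : NeZero q := ⟨by lia⟩
  set L := 1 + Real.log (p + q : ℕ)
  set B := (q + 1) / Real.log ((q + 1 : ℝ) / (p + 1))
  have hL : 0 < L := by positivity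
  have hB : 0 < B := div_pos (by positivity) (Real.log_pos (BS.one_lt_succ_div_succ hpq))
  have hq : (0 : ℝ) < q := Nat.cast_pos.2 (by lia)
  refine ⟨L⁻¹, q + B, 1, q, by positivity, by positivity, one_pos, hq, ?_⟩
  rintro g bs k hbs rfl
  have hlog : 0 ≤ Real.log (|k| + 1) := Real.log_nonneg (by simp)
  constructor
  · have hlower := BS.size_normalForm_le ((bs.map BSBlock.elem).prod * BS.a p q ^ k)
    rw [BS.normalForm_prod_elem_mul_a_zpow hbs, NormalForm.size, List.length_reverse,
      ← inv_mul_le_iff₀ hL] at hlower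
    linarith
  · have hupper := BS.wordLength_prod_elem_mul_a_zpow_le hpq bs k
    have hlen : 0 ≤ B * bs.length := by positivity
    have hqlog : 0 ≤ q * Real.log (|k| + 1) := by positivity
    linarith
end

section
/- For all integers p, q with 1 ≤ p < q, the Baumslag–Solitar group BS(p,q) = ⟨a, t | t a^p t⁻¹ = a^q⟩ belongs to the class ℬ_𝔦, where 𝔦 is the identity function 𝔦(n) = n. -/
/-!
By Britton's lemma every element of `BS(p,q)` is uniquely a reduced product of blocks `aⁱt` and
`aʲt⁻¹` followed by a power `aᵏ`. Represent it by its blocks followed by the base `q` expansion of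
`k`, least significant digit first. Right multiplication by `a` only replaces `k` by `k + 1`. For
right multiplication by `t`, write `k = r + q * d` and use `a^q t = t a^p`: either the block `aʳt`
is pushed and `k` becomes `p * d`, or `r = 0`, a block `aʲt⁻¹` is popped and `k` becomes
`j + p * d`. Both relations are regular because they leave the other blocks alone and act on the
exponent by affine maps, whose carries are bounded.

Since `p < q`, conjugation by `t` shrinks exponents geometrically, so `aᵏ` has word length
logarithmic in `|k|`, that is, linear in the number of its digits. Hence the represented element and
the evaluation of the representing word both lie within a linear distance of the identity.
-/

namespace CAG

section RegularLanguages

variable {α β : Type*}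

theorem isRegular_congr {L M : Language α} (h : ∀ w, w ∈ L ↔ w ∈ M) :
    L.IsRegular ↔ M.IsRegular := by
  rw [Language.ext h]

theorem isRegular_of_finite_eventual_leftQuotients [Finite α] {L : Language α} (N : ℕ)
    {𝓚 : Set (Language α)} (h𝓚 : 𝓚.Finite)
    (h : ∀ u, ∃ K ∈ 𝓚, ∀ w : List α, N ≤ w.length → (u ++ w ∈ L ↔ w ∈ K)) : L.IsRegular := by
  have hshort : {w : List α | w.length < N}.Finite := List.finite_length_lt α N
  let glue (K : Language α) (F : Set (List α)) : Language α :=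
    {w | N ≤ w.length ∧ w ∈ K ∨ w ∈ F}
  refine .of_finite_range_leftQuotient <|
    (h𝓚.image2 glue hshort.powerset).subset <| Set.range_subset_iff.2 fun u ↦ ?_
  obtain ⟨K, hK, hKu⟩ := h u
  refine ⟨K, hK, {w | w.length < N ∧ u ++ w ∈ L}, fun w hw ↦ hw.1, ?_⟩
  ext w
  rw [Language.mem_leftQuotient]
  change N ≤ w.length ∧ w ∈ K ∨ w.length < N ∧ u ++ w ∈ L ↔ u ++ w ∈ L
  rcases lt_or_ge w.length N with hw | hw
  · simp [hw]
  · simp [hw, hKu w hw]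

theorem isRegular_of_eventual_transitions {ι : Type*} [Finite α] [Finite ι] (L : ι → Language α)
    (N : ℕ) (step : ι → α → Set ι)
    (hstep : ∀ i x w, N ≤ w.length → (x :: w ∈ L i ↔ ∃ j ∈ step i x, w ∈ L j)) (i : ι) :
    (L i).IsRegular := by
  refine isRegular_of_finite_eventual_leftQuotients N
    (Set.finite_range fun J : Set ι ↦ (⨆ j ∈ J, L j : Language α)) fun u ↦ ?_
  suffices ∃ J : Set ι, ∀ w : List α, N ≤ w.length → (u ++ w ∈ L i ↔ ∃ j ∈ J, w ∈ L j) by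
    obtain ⟨J, hJ⟩ := this
    exact ⟨_, ⟨J, rfl⟩, by simpa [Language.mem_iSup] using hJ⟩
  induction u generalizing i with
  | nil => exact ⟨{i}, by simp⟩
  | cons x u ih =>
    choose J hJ using ih
    refine ⟨⋃ j ∈ step i x, J j, fun w hw ↦ ?_⟩
    have huw : N ≤ (u ++ w).length := by grind
    rw [List.cons_append, hstep i x _ huw]
    simp only [hJ _ w hw, Set.mem_iUnion]
    grind

theorem isRegular_of_eventual_cons [Finite α] {L : Language α} (N : ℕ) (K : α → Language α)
    (hK : ∀ x, (K x).IsRegular) (h : ∀ x w, N ≤ w.length → (x :: w ∈ L ↔ w ∈ K x)) :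
    L.IsRegular := by
  refine isRegular_of_finite_eventual_leftQuotients N
    ((Set.finite_iUnion fun x ↦ (hK x).finite_range_leftQuotient).insert L) fun u ↦ ?_
  cases u with
  | nil => exact ⟨L, by simp⟩
  | cons x u =>
    exact ⟨(K x).leftQuotient u, .inr (Set.mem_iUnion.2 ⟨x, u, rfl⟩),
      fun w hw ↦ h x (u ++ w) (by grind)⟩

theorem isRegular_iSup {ι : Type*} [Finite ι] {L : ι → Language α} (hL : ∀ i, (L i).IsRegular) :
    (⨆ i, L i).IsRegular := by
  suffices ∀ s : Set ι, s.Finite → (⨆ i ∈ s, L i).IsRegular by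
    simpa using this Set.univ Set.finite_univ
  intro s hs
  induction s, hs using Set.Finite.induction_on with
  | empty =>
    simp only [Set.mem_empty_iff_false, iSup_false, iSup_bot]
    exact .of_finite_range_leftQuotient <|
      (Set.finite_singleton ⊥).subset <| Set.range_subset_iff.2 fun u ↦ rfl
  | insert _ _ ih =>
    rw [iSup_insert]
    exact (hL _).add ih

theorem isRegular_mul {L M : Language α} (hL : L.IsRegular) (hM : M.IsRegular) :
    (L * M).IsRegular := by
  let glue (K : Language α) (P : Set (Language α)) : Language α := K * M + sSup P
  refine .of_finite_range_leftQuotient <|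
    (hL.finite_range_leftQuotient.image2 glue hM.finite_range_leftQuotient.powerset).subset <|
    Set.range_subset_iff.2 fun u ↦ ?_
  refine ⟨_, ⟨u, rfl⟩, {K | ∃ v w, v ++ w = u ∧ v ∈ L ∧ M.leftQuotient w = K}, ?_, ?_⟩
  · rintro _ ⟨_, w, -, -, rfl⟩
    exact ⟨w, rfl⟩
  · ext x
    have hsSup (P : Set (Language α)) : x ∈ sSup P ↔ ∃ K ∈ P, x ∈ K := Set.mem_sUnion
    simp only [glue, Language.mem_leftQuotient, Language.mem_mul, Language.mem_add, hsSup]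
    constructor
    · rintro (⟨v, hv, b, hb, rfl⟩ | ⟨_, ⟨v, w, rfl, hv, rfl⟩, hx⟩)
      · exact ⟨u ++ v, hv, b, hb, by simp⟩
      · exact ⟨v, hv, w ++ x, hx, by simp⟩
    · rintro ⟨a, ha, b, hb, hab⟩
      obtain ⟨w, rfl, rfl⟩ | ⟨v, rfl, rfl⟩ := List.append_eq_append_iff.1 hab
      · exact .inr ⟨_, ⟨a, w, rfl, ha, rfl⟩, hb⟩
      · exact .inl ⟨v, ha, b, hb, rfl⟩

theorem isRegular_flatMap [Finite α] [Finite β] {L : Language α} (hL : L.IsRegular)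
    (h : α → List β) (hne : ∀ x, h x ≠ []) :
    Language.IsRegular {w | ∃ v ∈ L, w = v.flatMap h} := by
  obtain ⟨σ, _, M, rfl⟩ := hL
  obtain ⟨n, hn⟩ := (Set.finite_range fun x ↦ (h x).length).bddAbove
  have : Finite {v : List β // v.length ≤ n} := List.finite_length_le β n
  let pending (i : σ × {v : List β // v.length ≤ n}) : Language β :=
    {w | ∃ v ∈ M.acceptsFrom i.1, w = i.2 ++ v.flatMap h}
  suffices (pending (M.start, ⟨[], Nat.zero_le n⟩)).IsRegular by
    simpa [pending, DFA.accepts] using this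
  refine isRegular_of_eventual_transitions pending 0 (fun i x ↦
    {j | (i.2 : List β) = x :: j.2 ∧ j.1 = i.1 ∨
      (i.2 : List β) = [] ∧ ∃ y, h y = x :: j.2 ∧ j.1 = M.step i.1 y}) ?_ _
  rintro ⟨s, v, hv⟩ x w -
  constructor
  · rintro ⟨u, hu, hw⟩
    rcases v with _ | ⟨z, v⟩
    · cases u with
      | nil => simp at hw
      | cons y u =>
        obtain ⟨z, v, hy⟩ := List.exists_cons_of_ne_nil (hne y)
        obtain ⟨rfl, rfl⟩ : x = z ∧ w = v ++ u.flatMap h := by simpa [hy] using hw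
        have hvn : v.length ≤ n := by grind [hn (Set.mem_range_self y)]
        exact ⟨(M.step s y, ⟨v, hvn⟩), .inr ⟨rfl, y, hy, rfl⟩, u, hu, rfl⟩
    · obtain ⟨rfl, rfl⟩ : x = z ∧ w = v ++ u.flatMap h := by simpa using hw
      exact ⟨(s, ⟨v, by grind⟩), .inl ⟨rfl, rfl⟩, u, hu, rfl⟩
  · rintro ⟨⟨_, v', hv'⟩, ⟨rfl, rfl⟩ | ⟨rfl, y, hy, rfl⟩, u, hu, rfl⟩
    · exact ⟨u, hu, by simp⟩
    · exact ⟨y :: u, hu, by simp [hy]⟩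

theorem isRegular_map [Finite α] [Finite β] {L : Language α} (hL : L.IsRegular) (f : α → β) :
    Language.IsRegular {w | ∃ v ∈ L, w = v.map f} := by
  simpa [List.map_eq_flatMap] using isRegular_flatMap hL (fun x ↦ [f x]) (by simp)

end RegularLanguages

section Convolution

variable {α β : Type*}

theorem conv_nil_left (v : List α) : conv [] v = v.map fun y ↦ (none, some y) := by
  induction v with simp_all [conv]

theorem conv_nil_right (u : List α) : conv u [] = u.map fun x ↦ (some x, none) := by
  induction u with simp_all [conv]

theorem conv_self (u : List α) : conv u u = u.map fun x ↦ (some x, some x) := by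
  induction u with simp_all [conv]

theorem length_conv (u v : List α) : (conv u v).length = max u.length v.length := by
  fun_induction conv u v <;> simp_all

theorem conv_swap (u v : List α) : conv v u = (conv u v).map Prod.swap := by
  fun_induction conv u v <;> simp_all [conv]

theorem conv_append {u v : List α} (h : u.length = v.length) (u' v' : List α) :
    conv (u ++ u') (v ++ v') = conv u v ++ conv u' v' := by
  fun_induction conv u v <;> simp_all [conv]

/-- The code on padded pairs of letters induced by a code `h` on letters, sending `(x, y)` to
`h x ⊗ h y`. The pair `(⋄, ⋄)`, which occurs in no convolution, keeps a nonempty code word. -/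
def convCode (h : α → List β) : Option α × Option α → List (Option β × Option β)
  | (some x, some y) => conv (h x) (h y)
  | (some x, none) => conv (h x) []
  | (none, some y) => conv [] (h y)
  | (none, none) => [(none, none)]

theorem conv_flatMap {h : α → List β} {n : ℕ} (hn : ∀ x, (h x).length = n) (u v : List α) :
    conv (u.flatMap h) (v.flatMap h) = (conv u v).flatMap (convCode h) := by
  fun_induction conv u v with
  | case1 => simp [conv]
  | case2 => simp_all [convCode, conv_nil_right]
  | case3 => simp_all [convCode, conv_nil_left]
  | case4 => simp_all [convCode, conv_append]

theorem convCode_ne_nil {h : α → List β} (hne : ∀ x, h x ≠ []) (c : Option α × Option α) :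
    convCode h c ≠ [] := by
  simp only [ne_eq, ← List.length_eq_zero_iff] at hne ⊢
  rcases c with ⟨_ | x, _ | y⟩ <;> simp [convCode, length_conv, hne]

theorem isRegularRel_range_iff {ι : Type*} {u v : ι → List α} :
    IsRegularRel (Set.range fun i ↦ (u i, v i)) ↔
      Language.IsRegular {w | ∃ i, w = conv (u i) (v i)} := by
  simp [IsRegularRel]

theorem IsRegularRel.iUnion {ι : Type*} [Finite ι] {R : ι → Set (List α × List α)}
    (hR : ∀ i, IsRegularRel (R i)) : IsRegularRel (⋃ i, R i) := by
  refine (isRegular_congr fun w ↦ ?_).1 (isRegular_iSup hR)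
  refine Language.mem_iSup.trans ?_
  change (∃ i, ∃ p ∈ R i, w = conv p.1 p.2) ↔ ∃ p ∈ ⋃ i, R i, w = conv p.1 p.2
  simp only [Set.mem_iUnion]
  grind

variable [Finite α]

theorem IsRegularRel.swap {R : Set (List α × List α)} (hR : IsRegularRel R) :
    IsRegularRel (Prod.swap '' R) := by
  refine (isRegular_congr fun w ↦ ⟨?_, ?_⟩).1 (isRegular_map hR Prod.swap)
  · rintro ⟨_, ⟨p, hp, rfl⟩, rfl⟩
    exact ⟨p.swap, ⟨p, hp, rfl⟩, (conv_swap _ _).symm⟩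
  · rintro ⟨_, ⟨p, hp, rfl⟩, rfl⟩
    exact ⟨_, ⟨p, hp, rfl⟩, conv_swap _ _⟩

theorem IsRegularRel.flatMap [Finite β] {R : Set (List α × List α)} (hR : IsRegularRel R)
    {h : α → List β} {n : ℕ} (hn : ∀ x, (h x).length = n) (hn0 : n ≠ 0) :
    IsRegularRel (Prod.map (List.flatMap h) (List.flatMap h) '' R) := by
  have hne x : h x ≠ [] := by grind
  refine (isRegular_congr fun w ↦ ⟨?_, ?_⟩).1
    (isRegular_flatMap hR (convCode h) (convCode_ne_nil hne))
  · rintro ⟨_, ⟨p, hp, rfl⟩, rfl⟩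
    exact ⟨_, ⟨p, hp, rfl⟩, (conv_flatMap hn _ _).symm⟩
  · rintro ⟨_, ⟨p, hp, rfl⟩, rfl⟩
    exact ⟨_, ⟨p, hp, rfl⟩, conv_flatMap hn _ _⟩

theorem IsRegularRel.append_left {L : Language α} (hL : L.IsRegular) {R : Set (List α × List α)}
    (hR : IsRegularRel R) :
    IsRegularRel (Set.image2 (fun w p ↦ (w ++ p.1, w ++ p.2)) L R) := by
  refine (isRegular_congr fun w ↦ ⟨?_, ?_⟩).1
    (isRegular_mul (isRegular_map hL fun x ↦ (some x, some x)) hR)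
  · rintro ⟨_, ⟨v, hv, rfl⟩, _, ⟨p, hp, rfl⟩, rfl⟩
    exact ⟨_, ⟨v, hv, p, hp, rfl⟩, by simp [conv_append, conv_self]⟩
  · rintro ⟨_, ⟨v, hv, p, hp, rfl⟩, rfl⟩
    exact ⟨_, ⟨v, hv, rfl⟩, _, ⟨p, hp, rfl⟩, by simp [conv_append, conv_self]⟩

end Convolution

section Digits

variable {q : ℕ}

theorem divModEquiv_digit_add_mul [NeZero q] (r : Fin q) (d : ℤ) :
    Int.divModEquiv q (r + q * d) = (d, r) := by
  rw [← Equiv.eq_symm_apply, Int.divModEquiv_symm_apply]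
  ring

theorem exists_eq_digit_add_mul [NeZero q] (k : ℤ) : ∃ (r : Fin q) (d : ℤ), k = r + q * d :=
  ⟨_, _, (Int.divModEquiv q).injective (divModEquiv_digit_add_mul _ _).symm⟩

theorem digit_add_mul_inj {r s : Fin q} {d e : ℤ} :
    (r + q * d : ℤ) = s + q * e ↔ r = s ∧ d = e := by
  have : NeZero q := ⟨r.pos.ne'⟩
  refine ⟨fun h ↦ ?_, by rintro ⟨rfl, rfl⟩; rfl⟩
  simpa only [divModEquiv_digit_add_mul, Prod.mk.injEq, and_comm] using
    congrArg (Int.divModEquiv q) h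

/-- The fixed points of `k ↦ ⌊k / q⌋`, at which base `q` expansions stop. -/
def IsTerminal (k : ℤ) : Prop := k = 0 ∨ k = -1

instance : DecidablePred IsTerminal := fun k ↦ inferInstanceAs (Decidable (k = 0 ∨ k = -1))

variable [q.AtLeastTwo]

theorem natAbs_lt_natAbs_digit_add_mul {r : Fin q} {d : ℤ}
    (h : ¬IsTerminal (r + q * d)) : d.natAbs < (r + q * d : ℤ).natAbs := by
  unfold IsTerminal at h
  have hq : (2 : ℤ) ≤ q := by exact_mod_cast Nat.AtLeastTwo.prop
  have hr : (r : ℤ) < q := by grind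
  rcases lt_trichotomy d (-1) with hd | rfl | hd
  · have : (q : ℤ) * (d + 1) ≤ 2 * (d + 1) := by nlinarith
    grind
  · grind
  · rcases eq_or_lt_of_le (show 0 ≤ d by lia) with rfl | hd
    · grind
    · have : 2 * d ≤ q * d := by nlinarith
      grind

@[elab_as_elim]
theorem digit_induction (q : ℕ) [q.AtLeastTwo] {P : ℤ → Prop} (zero : P 0) (neg_one : P (-1))
    (digit_add_mul : ∀ (r : Fin q) (d : ℤ), ¬IsTerminal (r + q * d) → P d → P (r + q * d))
    (k : ℤ) : P k := by
  induction hn : k.natAbs using Nat.strong_induction_on generalizing k with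
  | h n ih =>
    subst hn
    obtain ⟨r, d, rfl⟩ := exists_eq_digit_add_mul (q := q) k
    by_cases h : IsTerminal (r + q * d)
    · rcases h with h | h <;> rwa [h]
    · exact digit_add_mul r d h (ih _ (natAbs_lt_natAbs_digit_add_mul h) d rfl)

end Digits

/-- The letters of normal form words: stack blocks from `B`, base `q` digits, and the terminal
letters that record the sign of an exponent. -/
inductive Letter (B : Type*) (q : ℕ)
  | block (b : B)
  | digit (r : Fin q)
  | sign (nonneg : Bool)

instance {B : Type*} [Finite B] {q : ℕ} : Finite (Letter B q) :=
  .of_surjective (Sum.elim .block (Sum.elim .digit .sign)) <| by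
    rintro (b | r | s)
    exacts [⟨.inl b, rfl⟩, ⟨.inr (.inl r), rfl⟩, ⟨.inr (.inr s), rfl⟩]

section Encoding

variable (B : Type*) (q : ℕ) [q.AtLeastTwo]

/-- The base `q` expansion of an integer, least significant digit first, ended by a sign letter
standing for `0` or `-1`. Unlike sign–magnitude notation, it turns `k ↦ b * k + e` into a finite
carry propagation for `k` of either sign. -/
def enc (k : ℤ) : List (Letter B q) :=
  if _ : IsTerminal k then [.sign (k = 0)]
  else .digit (Int.divModEquiv q k).2 :: enc (Int.divModEquiv q k).1
termination_by k.natAbs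
decreasing_by
  obtain ⟨r, d, rfl⟩ := exists_eq_digit_add_mul (q := q) k
  rw [divModEquiv_digit_add_mul]
  exact natAbs_lt_natAbs_digit_add_mul ‹_›

variable {B q}

theorem enc_zero : enc B q 0 = [.sign true] := by simp [enc, IsTerminal]

theorem enc_neg_one : enc B q (-1) = [.sign false] := by simp [enc, IsTerminal]

theorem enc_digit_add_mul {r : Fin q} {d : ℤ} (h : ¬IsTerminal (r + q * d)) :
    enc B q (r + q * d) = .digit r :: enc B q d := by
  rw [enc, dif_neg h, divModEquiv_digit_add_mul]

theorem length_enc_pos (k : ℤ) : 0 < (enc B q k).length := by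
  induction k using digit_induction q <;> simp_all [enc_zero, enc_neg_one, enc_digit_add_mul]

theorem length_enc_le_length_enc_digit_add_mul (r : Fin q) (d : ℤ) :
    (enc B q d).length ≤ (enc B q (r + q * d)).length := by
  have hr : (r : ℤ) < q := by grind
  by_cases h : IsTerminal (r + q * d)
  · suffices d = r + q * d by rw [← this]
    rcases h with h | h <;> nlinarith
  · simp [enc_digit_add_mul h]

theorem abs_le_pow_length_enc (k : ℤ) : |k| ≤ (q : ℤ) ^ (enc B q k).length := by
  suffices -(q : ℤ) ^ (enc B q k).length ≤ k ∧ k < q ^ (enc B q k).length from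
    abs_le.2 ⟨this.1, this.2.le⟩
  have hq : (2 : ℤ) ≤ q := by exact_mod_cast Nat.AtLeastTwo.prop
  induction k using digit_induction q with
  | zero => simpa [enc_zero] using by lia
  | neg_one => simpa [enc_neg_one] using ⟨by lia, by lia⟩
  | digit_add_mul r d h ih =>
    have hr : (r : ℤ) < q := by grind
    rw [enc_digit_add_mul h, List.length_cons, pow_succ']
    have hlow := mul_le_mul_of_nonneg_left ih.1 (by lia : (0 : ℤ) ≤ q)
    have hupp := mul_le_mul_of_nonneg_left (Int.add_one_le_of_lt ih.2) (by lia : (0 : ℤ) ≤ q)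
    constructor <;> linarith

/-- One step in reading a word backwards into its blocks and the integer that follows them, by
Horner's scheme. -/
def Letter.decode : Letter B q → List B × ℤ → List B × ℤ
  | .block b, (l, k) => (b :: l, k)
  | .digit r, (l, k) => (l, r + q * k)
  | .sign s, _ => ([], if s then 0 else -1)

theorem foldr_decode_enc (k : ℤ) (z : List B × ℤ) :
    (enc B q k).foldr Letter.decode z = ([], k) := by
  induction k using digit_induction q with
  | zero => simp [enc_zero, Letter.decode]
  | neg_one => simp [enc_neg_one, Letter.decode]
  | digit_add_mul r d h ih => simp [enc_digit_add_mul h, Letter.decode, ih]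

theorem foldr_decode_map_block_append_enc (l : List B) (k : ℤ) (z : List B × ℤ) :
    (l.map Letter.block ++ enc B q k).foldr Letter.decode z = (l, k) := by
  induction l with
  | nil => exact foldr_decode_enc k z
  | cons b l ih => simp [ih, Letter.decode]

end Encoding

section AffineRelations

variable {B : Type*} {q : ℕ}

theorem finite_setOf_isTerminal_affine {b : ℤ} (hb : b ≠ 0) (e : ℤ) :
    {d : ℤ | IsTerminal (b * d + e)}.Finite :=
  (Set.toFinite {0, -1}).preimage fun x _ y _ h ↦ by simpa [hb] using h

/-- Adding the multiple `b * z` of a digit `z` to the carry `e` outputs the digit `r` and leaves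
the carry `e'`. -/
def CarryStep (b : ℤ) {q : ℕ} (z : Fin q) (e : ℤ) (r : Fin q) (e' : ℤ) : Prop :=
  b * z + e = r + q * e'

theorem CarryStep.affine_digit_add_mul {b e e' : ℤ} {z r : Fin q} (h : CarryStep b z e r e')
    (d : ℤ) : b * (z + q * d) + e = r + q * (b * d + e') := by
  unfold CarryStep at h
  linear_combination h

theorem CarryStep.abs_carry_le {b e e' E : ℤ} {z r : Fin q} (h : CarryStep b z e r e') (hb : 0 < b)
    (hbE : b ≤ E) (he : |e| ≤ E) : |e'| ≤ E := by
  unfold CarryStep at h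
  have hz : (z : ℤ) ≤ q - 1 := by grind
  have hr : (r : ℤ) ≤ q - 1 := by grind
  have hq : (0 : ℤ) < q := by grind
  have hbz : b * z ≤ E * (q - 1) := by gcongr; lia
  have hbz₀ : 0 ≤ b * z := by positivity
  rw [abs_le] at he ⊢
  have hlow : q * -E ≤ q * e' := by nlinarith
  have hupp : q * e' ≤ q * E := by nlinarith
  exact ⟨le_of_mul_le_mul_left hlow hq, le_of_mul_le_mul_left hupp hq⟩

theorem exists_carryStep [NeZero q] (b : ℤ) (z : Fin q) (e : ℤ) : ∃ r e', CarryStep b z e r e' :=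
  exists_eq_digit_add_mul _

variable [q.AtLeastTwo]

variable (B q) in
/-- The convolutions of the codes of `b * d + e` and `c * d + f`, for `d : ℤ`. -/
def affineLanguage (b c e f : ℤ) : Language (Option (Letter B q) × Option (Letter B q)) :=
  {w | ∃ d : ℤ, w = conv (enc B q (b * d + e)) (enc B q (c * d + f))}

theorem cons_mem_affineLanguage_iff {b c e f : ℤ} {N : ℕ}
    (hN : ∀ d : ℤ, IsTerminal (b * d + e) ∨ IsTerminal (c * d + f) →
      (conv (enc B q (b * d + e)) (enc B q (c * d + f))).length ≤ N)
    {x : Option (Letter B q) × Option (Letter B q)} {w} (hw : N < w.length) :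
    x :: w ∈ affineLanguage B q b c e f ↔ ∃ z r s e' f', CarryStep b z e r e' ∧
      CarryStep c z f s f' ∧ x = (some (.digit r), some (.digit s)) ∧
      w ∈ affineLanguage B q b c e' f' := by
  constructor
  · rintro ⟨d, hd⟩
    have hterm : ¬(IsTerminal (b * d + e) ∨ IsTerminal (c * d + f)) := by grind
    obtain ⟨z, d, rfl⟩ := exists_eq_digit_add_mul (q := q) d
    obtain ⟨r, e', hr⟩ := exists_carryStep b z e
    obtain ⟨s, f', hs⟩ := exists_carryStep c z f
    rw [hr.affine_digit_add_mul, hs.affine_digit_add_mul, not_or] at hterm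
    rw [hr.affine_digit_add_mul, hs.affine_digit_add_mul, enc_digit_add_mul hterm.1,
      enc_digit_add_mul hterm.2, conv, List.cons.injEq] at hd
    exact ⟨z, r, s, e', f', hr, hs, hd.1, d, hd.2⟩
  · rintro ⟨z, r, s, e', f', hr, hs, rfl, d, rfl⟩
    specialize hN (z + q * d)
    simp only [hr.affine_digit_add_mul, hs.affine_digit_add_mul, length_conv] at hN hw
    have hle₁ := length_enc_le_length_enc_digit_add_mul (B := B) r (b * d + e')
    have hle₂ := length_enc_le_length_enc_digit_add_mul (B := B) s (c * d + f')
    have hterm := not_or.1 fun h ↦ by have := hN h; lia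
    refine ⟨z + q * d, ?_⟩
    rw [hr.affine_digit_add_mul, hs.affine_digit_add_mul, enc_digit_add_mul hterm.1,
      enc_digit_add_mul hterm.2, conv]

variable [Finite B]

theorem isRegular_affineLanguage {b c : ℤ} (hb : 0 < b) (hc : 0 < c) (e f : ℤ) :
    (affineLanguage B q b c e f).IsRegular := by
  obtain ⟨E, hbE, hcE, heE, hfE⟩ : ∃ E, b ≤ E ∧ c ≤ E ∧ |e| ≤ E ∧ |f| ≤ E :=
    ⟨b + c + |e| + |f|, by grind, by grind, by grind, by grind⟩
  let Carry := {e : ℤ // |e| ≤ E}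
  have : Finite Carry := ((Set.finite_Icc (-E) E).subset fun _ ↦ abs_le.1).to_subtype
  have hshort (i : Carry × Carry) := ((finite_setOf_isTerminal_affine hb.ne' i.1.1).union
    (finite_setOf_isTerminal_affine hc.ne' i.2.1)).image fun d ↦
      (conv (enc B q (b * d + i.1.1)) (enc B q (c * d + i.2.1))).length
  obtain ⟨N, hN⟩ := (Set.finite_iUnion hshort).bddAbove
  refine isRegular_of_eventual_transitions
    (fun i : Carry × Carry ↦ affineLanguage B q b c i.1.1 i.2.1) (N + 1)
    (fun i x ↦ {j | ∃ z r s, CarryStep b z i.1.1 r j.1.1 ∧ CarryStep c z i.2.1 s j.2.1 ∧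
      x = (some (.digit r), some (.digit s))}) (fun i x w hw ↦ ?_) (⟨e, heE⟩, ⟨f, hfE⟩)
  rw [cons_mem_affineLanguage_iff (N := N) (fun d hd ↦ hN (Set.mem_iUnion.2 ⟨i, d, hd, rfl⟩)) hw]
  constructor
  · rintro ⟨z, r, s, e', f', hr, hs, hx, hw⟩
    exact ⟨(⟨e', hr.abs_carry_le hb hbE i.1.2⟩, ⟨f', hs.abs_carry_le hc hcE i.2.2⟩),
      ⟨z, r, s, hr, hs, hx⟩, hw⟩
  · rintro ⟨j, ⟨z, r, s, hr, hs, hx⟩, hw⟩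
    exact ⟨z, r, s, _, _, hr, hs, hx, hw⟩

theorem isRegularRel_affine {b c : ℤ} (hb : 0 < b) (hc : 0 < c) (e f : ℤ) :
    IsRegularRel (Set.range fun d : ℤ ↦ (enc B q (b * d + e), enc B q (c * d + f))) :=
  isRegularRel_range_iff.2 (isRegular_affineLanguage hb hc e f)

theorem isRegularRel_cons_affine (x : Letter B q) {b c : ℤ} (hb : 0 < b) (hc : 0 < c) (e f : ℤ) :
    IsRegularRel (Set.range fun d : ℤ ↦ (x :: enc B q (b * d + e), enc B q (c * d + f))) := by
  rw [isRegularRel_range_iff]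
  have hshort := (finite_setOf_isTerminal_affine hc.ne' f).image fun d ↦
    (conv (enc B q (b * d + e)) (enc B q (c * d + f))).length
  obtain ⟨N, hN⟩ := hshort.bddAbove
  replace hN d (hd : IsTerminal (c * d + f)) :
      (conv (enc B q (b * d + e)) (enc B q (c * d + f))).length ≤ N := hN ⟨d, hd, rfl⟩
  choose s f' hs using fun z : Fin q ↦ exists_carryStep c z f
  have hbq : 0 < b * q := mul_pos hb (mod_cast NeZero.pos q)
  let K (z : Fin q) := affineLanguage B q (b * q) c (b * z + e) (f' z)
  refine isRegular_of_eventual_cons (N + 1)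
    (fun y ↦ ⨆ z : {z // y = (some x, some (.digit (s z)))}, K z)
    (fun y ↦ isRegular_iSup fun z ↦ isRegular_affineLanguage hbq hc _ _) fun y w hw ↦ ?_
  rw [Language.mem_iSup]
  constructor
  · rintro ⟨d, hd⟩
    have hterm : ¬IsTerminal (c * d + f) := fun h ↦ by
      have hshort := hN d h
      have hlen := congrArg List.length hd
      simp only [length_conv, List.length_cons] at hlen hshort
      lia
    obtain ⟨z, d, rfl⟩ := exists_eq_digit_add_mul (q := q) d
    rw [(hs z).affine_digit_add_mul] at hterm
    rw [(hs z).affine_digit_add_mul, enc_digit_add_mul hterm, conv, List.cons.injEq] at hd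
    exact ⟨⟨z, hd.1⟩, d, hd.2.trans (by congr 2; ring)⟩
  · rintro ⟨⟨z, rfl⟩, d, rfl⟩
    have hfst : b * (z + q * d) + e = b * q * d + (b * z + e) := by ring
    specialize hN (z + q * d)
    simp only [hfst, (hs z).affine_digit_add_mul, length_conv] at hN hw
    have hle := length_enc_le_length_enc_digit_add_mul (B := B) (s z) (c * d + f' z)
    have hterm : ¬IsTerminal (s z + q * (c * d + f' z)) := fun h ↦ by have := hN h; lia
    refine ⟨z + q * d, ?_⟩
    rw [hfst, (hs z).affine_digit_add_mul, enc_digit_add_mul hterm, conv]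

end AffineRelations

section NormalForms

variable {p q : ℕ}

/-- `b.StacksOn c` if no `t` cancels against a `t⁻¹` in the product `c.elem * b.elem`, where `c`
is the block below `b` on the stack. -/
def BSBlock.StacksOn : BSBlock p q → BSBlock p q → Prop
  | .inl i, .inr _ => (i : ℕ) ≠ 0
  | .inr j, .inl _ => (j : ℕ) ≠ 0
  | _, _ => True

variable (p q) in
/-- A normal form in `BS(p,q)`, the reduced block word `b₁ ⋯ bₙ aᵏ`. The blocks are stored as
a stack with `bₙ` on top, as right multiplication by `t` only affects `bₙ` and `k`. -/
@[ext]
structure BSNormalForm where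
  stack : List (BSBlock p q)
  exponent : ℤ
  isChain : stack.IsChain BSBlock.StacksOn

namespace BSNormalForm

/-- Right multiplication of a normal form by `aⁿ`. -/
def shift (x : BSNormalForm p q) (n : ℤ) : BSNormalForm p q := ⟨x.stack, x.exponent + n, x.isChain⟩

theorem shift_shift (x : BSNormalForm p q) (m n : ℤ) : (x.shift m).shift n = x.shift (m + n) := by
  simp [shift, add_assoc]

/-- The isomorphism `BS(p,q) ≃ BS(q,p)` given by `t ↦ t⁻¹`, on normal forms. -/
def swap (x : BSNormalForm p q) : BSNormalForm q p where
  stack := x.stack.map Sum.swap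
  exponent := x.exponent
  isChain := by
    refine (List.isChain_map _).2 (x.isChain.imp ?_)
    rintro (i | j) (i' | j') h <;> exact h

/-- `TStep x y` if `y` is the normal form of `x * t`: since `a^q t = t a^p`, the last block
of `y` is `aʳt` with `r` the remainder of the exponent modulo `q`, unless it cancels against
the last block of `x`. -/
def TStep (x y : BSNormalForm p q) : Prop :=
  (∃ (r : Fin q) (d : ℤ), x.exponent = r + q * d ∧ y.stack = .inl r :: x.stack ∧
    y.exponent = p * d) ∨
  ∃ (j : Fin p) (d : ℤ), x.stack = .inr j :: y.stack ∧ x.exponent = q * d ∧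
    y.exponent = j + p * d

theorem TStep.swap {x y : BSNormalForm p q} (h : TStep x y) : TStep y.swap x.swap := by
  rcases h with ⟨r, d, hx, hst, hy⟩ | ⟨j, d, hst, hx, hy⟩
  · exact .inr ⟨r, d, by simp [BSNormalForm.swap, hst], hy, hx⟩
  · exact .inl ⟨j, d, hy, by simp [BSNormalForm.swap, hst], hx⟩

theorem swap_swap (x : BSNormalForm p q) : x.swap.swap = x := by
  ext1 <;> simp [swap]

theorem TStep.shift {x y : BSNormalForm p q} (h : TStep x y) : TStep (x.shift q) (y.shift p) := by
  rcases h with ⟨r, d, hx, hst, hy⟩ | ⟨j, d, hst, hx, hy⟩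
  · exact .inl ⟨r, d + 1, by simp only [BSNormalForm.shift]; linarith, hst,
      by simp only [BSNormalForm.shift]; linarith⟩
  · exact .inr ⟨j, d + 1, hst, by simp only [BSNormalForm.shift]; linarith,
      by simp only [BSNormalForm.shift]; linarith⟩

variable (p q) in
/-- Right multiplication by `a`. -/
def mulA : Equiv.Perm (BSNormalForm p q) where
  toFun x := x.shift 1
  invFun x := x.shift (-1)
  left_inv x := by ext1 <;> simp [shift]
  right_inv x := by ext1 <;> simp [shift]

theorem mulA_zpow_apply (n : ℤ) (x : BSNormalForm p q) : (mulA p q ^ n) x = x.shift n := by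
  induction n using Int.induction_on generalizing x with
  | zero => ext1 <;> simp [shift]
  | succ n ih =>
    rw [zpow_add_one, Equiv.Perm.mul_apply, ih, add_comm]
    exact shift_shift x 1 n
  | pred n ih =>
    rw [zpow_sub_one, Equiv.Perm.mul_apply, ih, sub_eq_neg_add]
    exact shift_shift x (-1) (-n)

variable [NeZero q]

theorem exists_tStep (x : BSNormalForm p q) : ∃ y, TStep x y := by
  obtain ⟨r, d, hx⟩ := exists_eq_digit_add_mul (q := q) x.exponent
  by_cases h : (.inl r :: x.stack).IsChain BSBlock.StacksOn
  · exact ⟨⟨_, p * d, h⟩, .inl ⟨r, d, hx, rfl, rfl⟩⟩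
  · obtain ⟨j, st, hst, hr⟩ : ∃ j st, x.stack = .inr j :: st ∧ (r : ℕ) = 0 := by
      rw [List.isChain_cons, not_and_or, or_iff_left (not_not.2 x.isChain)] at h
      rcases hs : x.stack with _ | ⟨i | j, st⟩ <;>
        simp_all [BSBlock.StacksOn]
    refine ⟨⟨st, j + p * d, ?_⟩, .inr ⟨j, d, hst, by simpa [hr] using hx, rfl⟩⟩
    exact (List.isChain_cons.1 (hst ▸ x.isChain)).2

theorem TStep.unique {x y z : BSNormalForm p q} (hy : TStep x y) (hz : TStep x z) : y = z := by
  have push_ne_pop {y : BSNormalForm p q} {r : Fin q} {d e : ℤ} {j : Fin p} {st}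
      (hst : y.stack = .inl r :: x.stack) (hx : x.exponent = r + q * d)
      (hst' : x.stack = .inr j :: st) (hx' : x.exponent = q * e) : False := by
    have hchain : (.inl r :: x.stack).IsChain BSBlock.StacksOn := hst ▸ y.isChain
    have hr : (r : ℕ) ≠ 0 := (List.isChain_cons.1 hchain).1 (.inr j) (by simp [hst'])
    have : r = 0 := (digit_add_mul_inj.1 (by simpa [hx] using hx' :
      (r + q * d : ℤ) = (0 : Fin q) + q * e)).1
    exact hr (by simp [this])
  rcases hy with ⟨r, d, hx, hst, hy⟩ | ⟨j, d, hst, hx, hy⟩ <;>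
    rcases hz with ⟨s, e, hx', hst', hz⟩ | ⟨i, e, hst', hx', hz⟩
  · obtain ⟨rfl, rfl⟩ := digit_add_mul_inj.1 (hx.symm.trans hx')
    exact BSNormalForm.ext (hst.trans hst'.symm) (hy.trans hz.symm)
  · exact (push_ne_pop hst hx hst' hx').elim
  · exact (push_ne_pop hst' hx' hst hx).elim
  · obtain ⟨hji, hstack⟩ := List.cons_eq_cons.1 (hst.symm.trans hst')
    obtain rfl : j = i := Sum.inr_injective hji
    obtain rfl : d = e := mul_left_cancel₀ (by simp [NeZero.ne]) (hx.symm.trans hx')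
    exact BSNormalForm.ext hstack (hy.trans hz.symm)

variable [NeZero p]

variable (p q) in
/-- Right multiplication by `t`. -/
noncomputable def mulT : Equiv.Perm (BSNormalForm p q) where
  toFun x := (exists_tStep x).choose
  invFun y := (exists_tStep y.swap).choose.swap
  left_inv x := by
    have h := (exists_tStep _).choose_spec.unique (exists_tStep x).choose_spec.swap
    exact (congrArg swap h).trans (swap_swap x)
  right_inv y := by
    refine (exists_tStep _).choose_spec.unique ?_
    simpa only [swap_swap] using (exists_tStep y.swap).choose_spec.swap

theorem mulT_eq_iff {x y : BSNormalForm p q} : mulT p q x = y ↔ TStep x y :=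
  ⟨fun h ↦ h ▸ (exists_tStep x).choose_spec, fun h ↦ (exists_tStep x).choose_spec.unique h⟩

theorem mulT_mul_mulA_pow : mulT p q * mulA p q ^ q = mulA p q ^ p * mulT p q := by
  ext1 x
  rw [← zpow_natCast, ← zpow_natCast, Equiv.Perm.mul_apply, Equiv.Perm.mul_apply,
    mulA_zpow_apply, mulA_zpow_apply]
  exact mulT_eq_iff.2 (mulT_eq_iff.1 rfl).shift

open MulOpposite in
variable (p q) in
/-- The right action of `BS(p,q)` on normal forms. -/
noncomputable def action : BS p q →* (Equiv.Perm (BSNormalForm p q))ᵐᵒᵖ :=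
  PresentedGroup.toGroup (f := ![op (mulA p q), op (mulT p q)]) <| by
    rintro _ rfl
    simp only [map_mul, map_pow, map_inv, FreeGroup.lift_apply_of]
    rw [mul_inv_eq_one, mul_inv_eq_iff_eq_mul]
    exact unop_injective (by simp [mulT_mul_mulA_pow])

theorem unop_action_a : (action p q (BS.a p q)).unop = mulA p q := by simp [action, BS.a]

theorem unop_action_t : (action p q (BS.t p q)).unop = mulT p q := by simp [action, BS.t]

theorem unop_action_elem_apply (b : BSBlock p q) (st : List (BSBlock p q))
    (h : (b :: st).IsChain BSBlock.StacksOn) :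
    (action p q b.elem).unop ⟨st, 0, (List.isChain_cons.1 h).2⟩ = ⟨b :: st, 0, h⟩ := by
  rcases b with r | j
  · simp only [BSBlock.elem, map_mul, map_pow, MulOpposite.unop_mul, MulOpposite.unop_pow,
      unop_action_a, unop_action_t, Equiv.Perm.mul_apply]
    rw [← zpow_natCast, mulA_zpow_apply]
    exact mulT_eq_iff.2 (.inl ⟨r, 0, by simp [shift], rfl, by simp⟩)
  · simp only [BSBlock.elem, map_mul, map_pow, map_inv, MulOpposite.unop_mul,
      MulOpposite.unop_pow, MulOpposite.unop_inv, unop_action_a, unop_action_t,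
      Equiv.Perm.mul_apply]
    rw [← zpow_natCast, mulA_zpow_apply, Equiv.Perm.inv_eq_iff_eq, eq_comm, mulT_eq_iff]
    exact .inr ⟨j, 0, rfl, by simp, by simp [shift]⟩

end BSNormalForm

end NormalForms

section Values

variable {p q : ℕ}

theorem semiconjBy_t_a_zpow (d : ℤ) :
    SemiconjBy (BS.t p q) (BS.a p q ^ (p * d : ℤ)) (BS.a p q ^ (q * d : ℤ)) := by
  have h : SemiconjBy (BS.t p q) (BS.a p q ^ p) (BS.a p q ^ q) := by
    rw [SemiconjBy, ← mul_inv_eq_iff_eq_mul, ← mul_inv_eq_one]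
    exact PresentedGroup.one_of_mem (rels := BSRels p q) rfl
  simpa only [zpow_mul, zpow_natCast] using h.zpow_right d

namespace BSNormalForm

/-- The element of `BS(p,q)` represented by a normal form. -/
def value (x : BSNormalForm p q) : BS p q :=
  (x.stack.reverse.map BSBlock.elem).prod * BS.a p q ^ x.exponent

theorem value_shift (x : BSNormalForm p q) (n : ℤ) :
    (x.shift n).value = x.value * BS.a p q ^ n := by
  simp [value, shift, zpow_add, mul_assoc]

theorem TStep.value_eq {x y : BSNormalForm p q} (h : TStep x y) : y.value = x.value * BS.t p q := by
  rcases h with ⟨r, d, hx, hst, hy⟩ | ⟨j, d, hst, hx, hy⟩ <;>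
    have hd := (semiconjBy_t_a_zpow (p := p) (q := q) d).eq
  · simp [value, hx, hst, hy, BSBlock.elem, zpow_add, mul_assoc, hd]
  · simp [value, hx, hst, hy, BSBlock.elem, zpow_add, mul_assoc, ← hd]

variable [NeZero p] [NeZero q]

theorem value_unop_action_apply (g : BS p q) (x : BSNormalForm p q) :
    ((action p q g).unop x).value = x.value * g := by
  let H : Subgroup (BS p q) :=
    { carrier := {g | ∀ x, ((action p q g).unop x).value = x.value * g}
      mul_mem' hg hh x := by simp [hh _, hg _, mul_assoc]
      one_mem' x := by simp
      inv_mem' {g} hg x := by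
        simpa [eq_mul_inv_iff_mul_eq] using (hg ((action p q g).unop⁻¹ x)).symm }
  suffices H = ⊤ from (this ▸ Subgroup.mem_top g : g ∈ H) x
  rw [eq_top_iff, ← PresentedGroup.closure_range_of, Subgroup.closure_le]
  rintro _ ⟨i, rfl⟩ x
  fin_cases i
  · change ((action p q (BS.a p q)).unop x).value = x.value * BS.a p q
    rw [unop_action_a]
    exact (value_shift x 1).trans (by rw [zpow_one])
  · change ((action p q (BS.t p q)).unop x).value = x.value * BS.t p q
    rw [unop_action_t]
    exact (mulT_eq_iff.1 rfl).value_eq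

theorem unop_action_value_apply (x : BSNormalForm p q) :
    (action p q x.value).unop ⟨[], 0, .nil⟩ = x := by
  have hstack (st : List (BSBlock p q)) (h : st.IsChain BSBlock.StacksOn) :
      (action p q (st.reverse.map BSBlock.elem).prod).unop ⟨[], 0, .nil⟩ = ⟨st, 0, h⟩ := by
    induction st with
    | nil => simp
    | cons b st ih =>
      simp [-List.map_reverse, ih (List.isChain_cons.1 h).2, unop_action_elem_apply b st h]
  rw [value, map_mul, MulOpposite.unop_mul, Equiv.Perm.mul_apply, hstack _ x.isChain, map_zpow,
    MulOpposite.unop_zpow, unop_action_a, mulA_zpow_apply]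
  simp [shift]

variable (p q) in
/-- Britton's normal form theorem for `BS(p,q)`. -/
noncomputable def valueEquiv : BSNormalForm p q ≃ BS p q where
  toFun := value
  invFun g := (action p q g).unop ⟨[], 0, .nil⟩
  left_inv := unop_action_value_apply
  right_inv g := by rw [value_unop_action_apply]; simp [value]

theorem a_ne_t : BS.a p q ≠ BS.t p q := by
  intro h
  have hvalue : valueEquiv p q ⟨[], 1, .nil⟩ = valueEquiv p q ⟨[.inl 0], 0, .singleton _⟩ := by
    simpa [valueEquiv, value, BSBlock.elem] using h
  simpa using congrArg stack ((valueEquiv p q).injective hvalue)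

end BSNormalForm

end Values

section StackLanguages

variable {α B : Type*}

theorem isRegular_of_isRegularRel_diag [Finite α] {L : Language α}
    (hL : IsRegularRel ((fun w ↦ (w, w)) '' L)) : L.IsRegular := by
  obtain _ | ⟨⟨x₀⟩⟩ := isEmpty_or_nonempty α
  · exact isRegular_of_eventual_cons 0 (fun _ ↦ L) isEmptyElim isEmptyElim
  refine (isRegular_congr fun w ↦ ?_).1 (isRegular_map hL fun c ↦ c.1.getD x₀)
  constructor
  · rintro ⟨_, ⟨_, ⟨v, hv, rfl⟩, rfl⟩, rfl⟩
    rw [conv_self, List.map_map]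
    exact (List.map_id v).symm ▸ hv
  · exact fun hw ↦ ⟨_, ⟨_, ⟨w, hw, rfl⟩, rfl⟩, by simp [conv_self, Function.comp_def]⟩

theorem isRegular_isChain_head?_eq [Finite B] (R : B → B → Prop) (s : Option B) :
    Language.IsRegular {l : List B | l.IsChain R ∧ l.head? = s} := by
  refine isRegular_of_eventual_transitions (fun s ↦ {l : List B | l.IsChain R ∧ l.head? = s}) 0
    (fun s b ↦ {s' | s = some b ∧ ∀ c ∈ s', R b c}) (fun s b l _ ↦ ?_) s
  constructor
  · rintro ⟨h, hs⟩
    exact ⟨l.head?, ⟨hs.symm, (List.isChain_cons.1 h).1⟩, (List.isChain_cons.1 h).2, rfl⟩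
  · rintro ⟨_, ⟨rfl, hR⟩, h, rfl⟩
    exact ⟨List.isChain_cons.2 ⟨hR, h⟩, rfl⟩

theorem isRegularRel_isChain_append [Finite α] [Finite B] (R : B → B → Prop) (f : B → α)
    {K : Option B → Set (List α × List α)} (hK : ∀ s, IsRegularRel (K s)) :
    IsRegularRel {x | ∃ l : List B, l.IsChain R ∧ ∃ p ∈ K l.head?,
      x = (l.reverse.map f ++ p.1, l.reverse.map f ++ p.2)} := by
  have hprefix s := isRegular_map (isRegular_isChain_head?_eq R s).reverse f
  convert IsRegularRel.iUnion fun s ↦ (hK s).append_left (hprefix s) using 1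
  ext x
  simp only [Set.mem_iUnion]
  constructor
  · rintro ⟨l, hl, p, hp, rfl⟩
    refine ⟨l.head?, _, ⟨l.reverse, ?_, rfl⟩, p, hp, rfl⟩
    exact ⟨by rwa [List.reverse_reverse], by rw [List.reverse_reverse]⟩
  · rintro ⟨s, _, ⟨l, ⟨hl, rfl⟩, rfl⟩, p, hp, rfl⟩
    exact ⟨l.reverse, hl, p, hp, by simp⟩

end StackLanguages

namespace BSNormalForm

variable {p q : ℕ} [q.AtLeastTwo]

/-- The word of a normal form: its blocks from left to right, then its exponent in base `q`. -/
def word (x : BSNormalForm p q) : List (Letter (BSBlock p q) q) :=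
  x.stack.reverse.map .block ++ enc _ q x.exponent

theorem word_injective : Function.Injective (word (p := p) (q := q)) := fun x y h ↦ by
  have := congrArg (List.foldr Letter.decode ([], 0)) h
  simp only [word, foldr_decode_map_block_append_enc, Prod.mk.injEq, List.reverse_inj] at this
  exact BSNormalForm.ext this.1 this.2

theorem isRegularRel_range_word_shift (n : ℤ) :
    IsRegularRel (Set.range fun x : BSNormalForm p q ↦ (x.word, (x.shift n).word)) := by
  convert isRegularRel_isChain_append BSBlock.StacksOn Letter.block
    fun _ ↦ isRegularRel_affine (B := BSBlock p q) (q := q) one_pos one_pos 0 n using 1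
  ext w
  constructor
  · rintro ⟨x, rfl⟩
    exact ⟨x.stack, x.isChain, _, ⟨x.exponent, rfl⟩, by simp [word, shift]⟩
  · rintro ⟨st, hst, _, ⟨k, rfl⟩, rfl⟩
    exact ⟨⟨st, k, hst⟩, by simp [word, shift]⟩

theorem isRegular_range_word :
    Language.IsRegular (Set.range (word (p := p) (q := q)) : Set (List (Letter _ q))) := by
  refine isRegular_of_isRegularRel_diag ?_
  convert isRegularRel_range_word_shift (p := p) (q := q) 0 using 1
  exact (Set.range_comp _ _).symm.trans (by simp [Function.comp_def, shift])

/-- The part of the relation of multiplication by `t` after the common stack prefix, when the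
block `b` is pushed (for `b = aʳt`) or popped (for `b = aʲt⁻¹`). -/
def tCore : BSBlock p q → Set (List (Letter (BSBlock p q) q) × List (Letter (BSBlock p q) q))
  | .inl r => Set.range fun d : ℤ ↦ (enc _ q (r + q * d), .block (.inl r) :: enc _ q (p * d))
  | .inr j => Set.range fun d : ℤ ↦ (.block (.inr j) :: enc _ q (q * d), enc _ q (j + p * d))

theorem isRegularRel_tCore [NeZero p] (b : BSBlock p q) : IsRegularRel (tCore b) := by
  have hp : (0 : ℤ) < p := mod_cast NeZero.pos p
  have hq : (0 : ℤ) < q := mod_cast NeZero.pos q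
  have hpush (r : Fin q) :=
    isRegularRel_cons_affine (.block (.inl r) : Letter (BSBlock p q) q) hp hq 0 r
  have hpop (j : Fin p) :=
    isRegularRel_cons_affine (.block (.inr j) : Letter (BSBlock p q) q) hq hp 0 j
  rcases b with r | j
  · simpa [tCore, ← Set.range_comp, Function.comp_def, add_comm] using (hpush r).swap
  · simpa [tCore, add_comm] using hpop j

theorem isRegularRel_word_tStep [NeZero p] :
    IsRegularRel {w | ∃ x y : BSNormalForm p q, TStep x y ∧ w = (x.word, y.word)} := by
  convert isRegularRel_isChain_append BSBlock.StacksOn Letter.block fun s ↦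
    IsRegularRel.iUnion fun b : {b : BSBlock p q // ∀ c ∈ s, b.StacksOn c} ↦
      isRegularRel_tCore b.1 using 1
  ext w
  simp only [Set.mem_iUnion]
  constructor
  · rintro ⟨⟨st, k, hst⟩, ⟨st', k', hst'⟩, ⟨r, d, rfl, rfl, rfl⟩ | ⟨j, d, rfl, rfl, rfl⟩, rfl⟩
    · exact ⟨st, hst, _, ⟨⟨.inl r, (List.isChain_cons.1 hst').1⟩, d, rfl⟩, by simp [word]⟩
    · exact ⟨st', hst', _, ⟨⟨.inr j, (List.isChain_cons.1 hst).1⟩, d, rfl⟩, by simp [word]⟩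
  · rintro ⟨st, hst, _, ⟨⟨r | j, hb⟩, d, rfl⟩, rfl⟩
    · exact ⟨⟨st, r + q * d, hst⟩, ⟨.inl r :: st, p * d, List.isChain_cons.2 ⟨hb, hst⟩⟩,
        .inl ⟨r, d, rfl, rfl, rfl⟩, by simp [word]⟩
    · exact ⟨⟨.inr j :: st, q * d, List.isChain_cons.2 ⟨hb, hst⟩⟩, ⟨st, j + p * d, hst⟩,
        .inr ⟨j, d, rfl, rfl, rfl⟩, by simp [word]⟩

end BSNormalForm

section WordBalls

variable {G : Type*} [Group G] {A : Set G}

/-- The ball of radius `n` around the identity in the word metric of `A`, without the junk value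
of `wordLength` at elements outside the subgroup generated by `A`. -/
def wordBall (A : Set G) (n : ℕ) : Set G := {g | ∃ w, eval A w = g ∧ w.length ≤ n}

variable {g h : G} {m n : ℕ}

theorem wordLength_le_of_mem_wordBall (hg : g ∈ wordBall A n) : wordLength A g ≤ n := by
  obtain ⟨w, hw, hn⟩ := hg
  have hw' : wordLength A g ≤ w.length := Nat.sInf_le ⟨w, hw, rfl⟩
  exact hw'.trans hn

theorem eval_mem_wordBall (w : List (Alph A)) : eval A w ∈ wordBall A w.length := ⟨w, rfl, le_rfl⟩

theorem wordBall_mono : Monotone (wordBall A) := fun _ _ hmn _ ⟨w, hw, hn⟩ ↦ ⟨w, hw, hn.trans hmn⟩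

theorem mem_wordBall_one (hg : g ∈ A ∪ A⁻¹) : g ∈ wordBall A 1 :=
  ⟨[⟨g, hg⟩], mul_one g, le_rfl⟩

theorem mul_mem_wordBall (hg : g ∈ wordBall A m) (hh : h ∈ wordBall A n) :
    g * h ∈ wordBall A (m + n) := by
  obtain ⟨w, rfl, hw⟩ := hg
  obtain ⟨v, rfl, hv⟩ := hh
  exact ⟨w ++ v, (congrArg List.prod List.map_append).trans List.prod_append, by grind⟩

theorem inv_mem_wordBall (hg : g ∈ wordBall A n) : g⁻¹ ∈ wordBall A n := by
  obtain ⟨w, rfl, hw⟩ := hg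
  refine wordBall_mono hw ?_
  clear hw
  induction w with
  | nil => exact ⟨[], inv_one.symm, le_rfl⟩
  | cons x w ih =>
    have hx : x.1⁻¹ ∈ A ∪ A⁻¹ := by simpa [or_comm] using x.2
    rw [show eval A (x :: w) = x.1 * eval A w from List.prod_cons, mul_inv_rev]
    exact mul_mem_wordBall ih (mem_wordBall_one hx)

theorem list_prod_mem_wordBall {l : List G} (hl : ∀ g ∈ l, g ∈ wordBall A n) :
    l.prod ∈ wordBall A (n * l.length) := by
  induction l with
  | nil => exact ⟨[], rfl, by simp⟩
  | cons g l ih =>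
    rw [List.forall_mem_cons] at hl
    exact wordBall_mono (by simp [mul_add, add_comm]) (mul_mem_wordBall hl.1 (ih hl.2))

theorem pow_mem_wordBall (hg : g ∈ A) (n : ℕ) : g ^ n ∈ wordBall A n := by
  simpa using list_prod_mem_wordBall (l := List.replicate n g) (n := 1)
    fun x hx ↦ List.eq_of_mem_replicate hx ▸ mem_wordBall_one (.inl hg)

theorem zpow_mem_wordBall (hg : g ∈ A) (k : ℤ) : g ^ k ∈ wordBall A k.natAbs := by
  obtain ⟨n, rfl | rfl⟩ := k.eq_nat_or_neg
  · simpa using pow_mem_wordBall hg n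
  · simpa using inv_mem_wordBall (pow_mem_wordBall hg n)

end WordBalls

section Distortion

variable {G : Type*} [Group G] {A : Set G} {a t : G} {p q : ℕ}

/-- `a ^ (r + q * d) = a ^ r * t * a ^ (p * d) * t⁻¹` shrinks the exponent by a factor `p / q`, up
to an error that the term `p * q` absorbs since `p + 1 ≤ q`. -/
theorem zpow_mem_wordBall_of_semiconjBy (ha : a ∈ A) (ht : t ∈ A)
    (hat : SemiconjBy t (a ^ p) (a ^ q)) (hpq : p < q) (j : ℕ) (k : ℤ)
    (hk : p ^ j * (|k| - p * q) ≤ (q : ℤ) ^ j) :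
    a ^ k ∈ wordBall A (p * q + 1 + (q + 1) * j) := by
  have hpq' : (p : ℤ) + 1 ≤ q := mod_cast hpq
  have : NeZero q := ⟨by lia⟩
  induction j generalizing k with
  | zero =>
    refine wordBall_mono ?_ (zpow_mem_wordBall ha k)
    zify
    simpa [add_comm] using hk
  | succ j ih =>
    obtain ⟨r, d, rfl⟩ := exists_eq_digit_add_mul (q := q) k
    have hrq : (r : ℤ) < q := by grind
    have hd : q * |d| ≤ |r + q * d| + q := by
      have habs : |(q * d : ℤ)| = q * |d| := by rw [abs_mul, Nat.abs_cast]
      grind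
    have hsmall : p ^ j * (|p * d| - p * q) ≤ (q : ℤ) ^ j := by
      refine le_of_mul_le_mul_left ?_ (by lia : (0 : ℤ) < q)
      calc q * (p ^ j * (|p * d| - p * q)) = (p : ℤ) ^ (j + 1) * (q * |d| - q * q) := by
            rw [abs_mul, Nat.abs_cast]; ring
        _ ≤ p ^ (j + 1) * (|r + q * d| - p * q) := by
            refine mul_le_mul_of_nonneg_left ?_ (by positivity)
            nlinarith [hpq', hd]
        _ ≤ q ^ (j + 1) := hk
        _ = q * q ^ j := pow_succ' _ _
    have hconj : a ^ (r + q * d : ℤ) = a ^ (r : ℕ) * (t * a ^ (p * d : ℤ) * t⁻¹) := by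
      have h := hat.zpow_right d
      rw [zpow_add, zpow_natCast, zpow_mul, zpow_mul, zpow_natCast, zpow_natCast,
        mul_inv_eq_of_eq_mul h.eq]
    have ht' := mem_wordBall_one (.inl ht)
    rw [hconj]
    refine wordBall_mono ?_ (mul_mem_wordBall (pow_mem_wordBall ha r) <|
      mul_mem_wordBall (mul_mem_wordBall ht' (ih _ hsmall)) (inv_mem_wordBall ht'))
    grind

theorem exists_forall_zpow_mem_wordBall (ha : a ∈ A) (ht : t ∈ A)
    (hat : SemiconjBy t (a ^ p) (a ^ q)) (hp : 0 < p) (hpq : p < q) :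
    ∃ C : ℕ, ∀ (n : ℕ) (k : ℤ), |k| ≤ (q : ℤ) ^ n → a ^ k ∈ wordBall A (p * q + 1 + C * n) := by
  obtain ⟨m, hm⟩ : ∃ m, p ^ m * q ≤ q ^ m := by
    have hp' : (0 : ℚ) < p := mod_cast hp
    obtain ⟨m, hm⟩ := pow_unbounded_of_one_lt (q : ℚ)
      ((one_lt_div hp').2 (mod_cast hpq : (p : ℚ) < q))
    rw [div_pow, lt_div_iff₀' (pow_pos hp' m)] at hm
    exact ⟨m, mod_cast hm.le⟩
  refine ⟨(q + 1) * m, fun n k hk ↦ ?_⟩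
  rw [mul_assoc]
  refine zpow_mem_wordBall_of_semiconjBy ha ht hat hpq _ k ?_
  calc (p : ℤ) ^ (m * n) * (|k| - p * q) ≤ p ^ (m * n) * q ^ n := by
        gcongr; exact (sub_le_self _ (by positivity)).trans hk
    _ = (p ^ m * q : ℕ) ^ n := by push_cast; ring
    _ ≤ (q ^ m : ℕ) ^ n := by gcongr
    _ = (q : ℤ) ^ (m * n) := by push_cast; ring

end Distortion

theorem BSBlock.elem_mem_wordBall {p q : ℕ} (b : BSBlock p q) :
    b.elem ∈ wordBall {BS.a p q, BS.t p q} (p + q) := by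
  have ha (n : ℕ) := pow_mem_wordBall (A := {BS.a p q, BS.t p q}) (.inl rfl) n
  have ht := mem_wordBall_one (A := {BS.a p q, BS.t p q}) (.inl (.inr rfl))
  rcases b with i | j
  · exact wordBall_mono (by lia) (mul_mem_wordBall (ha i) ht)
  · exact wordBall_mono (by lia) (mul_mem_wordBall (ha j) (inv_mem_wordBall ht))

theorem BSNormalForm.exists_value_mem_wordBall {p q : ℕ} [q.AtLeastTwo] (hp : 0 < p)
    (hpq : p < q) : ∃ C : ℕ, ∀ x : BSNormalForm p q,
      x.value ∈ wordBall {BS.a p q, BS.t p q} (C * x.word.length) := by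
  have hat : SemiconjBy (BS.t p q) (BS.a p q ^ p) (BS.a p q ^ q) := by
    simpa using semiconjBy_t_a_zpow (p := p) (q := q) 1
  obtain ⟨C, hC⟩ := exists_forall_zpow_mem_wordBall
    (A := {BS.a p q, BS.t p q}) (.inl rfl) (.inr rfl) hat hp hpq
  refine ⟨p + q + (p * q + 1 + C), fun x ↦ ?_⟩
  have hstack := list_prod_mem_wordBall (l := x.stack.reverse.map BSBlock.elem)
    (List.forall_mem_map.2 fun b _ ↦ b.elem_mem_wordBall)
  have hexp := hC _ _ (abs_le_pow_length_enc (B := BSBlock p q) x.exponent)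
  refine wordBall_mono ?_ (mul_mem_wordBall hstack hexp)
  have hpos := length_enc_pos (B := BSBlock p q) (q := q) x.exponent
  simp only [word, List.length_append, List.length_map, List.length_reverse]
  set s := x.stack.length
  set e := (enc (BSBlock p q) q x.exponent).length
  calc (p + q) * s + (p * q + 1 + C * e)
      ≤ (p + q) * s + ((p * q + 1) * e + C * e) := by
        gcongr; exact Nat.le_mul_of_pos_right _ hpos
    _ ≤ (p + q + (p * q + 1 + C)) * (s + e) :=
        Nat.le.intro (k := (p + q) * e + (p * q + 1 + C) * s) (by ring)

section UniformCodes

variable {α β : Type*}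

variable (α β) in
theorem exists_uniform_code [Finite α] [Nonempty α] [Nontrivial β] :
    ∃ (n : ℕ) (c : α → List β), n ≠ 0 ∧ (∀ x, (c x).length = n) ∧ Function.Injective c := by
  classical
  have := Fintype.ofFinite α
  obtain ⟨b, b', hb⟩ := exists_pair_ne β
  refine ⟨Fintype.card α, fun x ↦ Finset.univ.toList.map fun y ↦ if y = x then b else b',
    Fintype.card_ne_zero, by simp, fun x y hxy ↦ ?_⟩
  have hx := List.map_inj_left.1 hxy x (by simp)
  grind

theorem flatMap_injective {c : α → List β} {n : ℕ} (hn : ∀ x, (c x).length = n) (hn0 : n ≠ 0)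
    (hc : Function.Injective c) : Function.Injective (List.flatMap c) := by
  intro u v h
  have hne x : c x ≠ [] := by grind
  induction u generalizing v with
  | nil => cases v <;> simp_all
  | cons x u ih =>
    cases v with
    | nil => simp_all
    | cons y v =>
      obtain ⟨hxy, huv⟩ := List.append_inj h ((hn x).trans (hn y).symm)
      rw [hc hxy, ih huv]

end UniformCodes

section Transfer

variable {G : Type*} [Group G] {A : Set G}

theorem isCayleyAutomaticRep_range {word : G → List (Alph A)} (hinj : Function.Injective word)
    (hreg : Language.IsRegular (Set.range word))
    (hmul : ∀ a ∈ A, IsRegularRel (Set.range fun g ↦ (word g, word (g * a)))) :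
    IsCayleyAutomaticRep A (Set.range word : Set _) (Function.invFun word) := by
  have hleft := Function.leftInverse_invFun hinj
  refine ⟨hreg, ⟨fun _ _ ↦ trivial, ?_, fun g _ ↦ ⟨word g, ⟨g, rfl⟩, hleft g⟩⟩, fun a ha ↦ ?_⟩
  · rintro _ ⟨g, rfl⟩ _ ⟨h, rfl⟩ hgh
    rw [hleft, hleft] at hgh
    rw [hgh]
  · convert hmul a ha using 1
    ext ⟨u, v⟩
    constructor
    · rintro ⟨⟨g, rfl⟩, ⟨h, rfl⟩, hgh⟩
      rw [hleft, hleft] at hgh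
      exact ⟨g, by rw [hgh]⟩
    · rintro ⟨g, ⟨⟩⟩
      exact ⟨⟨g, rfl⟩, ⟨_, rfl⟩, by rw [hleft, hleft]⟩

theorem inB_identF_of_range {word : G → List (Alph A)} (hinj : Function.Injective word)
    (hreg : Language.IsRegular (Set.range word))
    (hmul : ∀ a ∈ A, IsRegularRel (Set.range fun g ↦ (word g, word (g * a))))
    {C : ℕ} (hC : ∀ g, g ∈ wordBall A (C * (word g).length)) : InB A identF := by
  refine ⟨_, _, isCayleyAutomaticRep_range hinj hreg hmul, 1 + C, 1, 1, by lia, one_pos, one_pos,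
    le_rfl, ?_⟩
  rintro n - _ ⟨g, rfl⟩ hn
  rw [Function.leftInverse_invFun hinj]
  have hg := wordBall_mono (Nat.mul_le_mul_left C hn) (hC g)
  have heval := inv_mem_wordBall (wordBall_mono hn (eval_mem_wordBall (word g)))
  have hdist := wordLength_le_of_mem_wordBall (mul_mem_wordBall heval hg)
  calc (cayleyDist A (eval A (word g)) g : ℝ) ≤ (n + C * n : ℕ) := mod_cast hdist
    _ = (1 + C : ℕ) * identF.toFun (1 * n) := by simp [identF]; ring

theorem inB_identF_of_finite_alphabet (hA : A.Finite) [Nontrivial (Alph A)] {Γ : Type*} [Finite Γ]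
    {word : G → List Γ} (hinj : Function.Injective word)
    (hreg : Language.IsRegular (Set.range word))
    (hmul : ∀ a ∈ A, IsRegularRel (Set.range fun g ↦ (word g, word (g * a))))
    {C : ℕ} (hC : ∀ g, g ∈ wordBall A (C * (word g).length)) : InB A identF := by
  have : Finite (Alph A) := (hA.union hA.inv).to_subtype
  have : Nonempty Γ := not_isEmpty_iff.1 fun _ ↦
    not_subsingleton (Alph A) (hinj.comp Subtype.val_injective).subsingleton
  obtain ⟨n, c, hn0, hn, hc⟩ := exists_uniform_code Γ (Alph A)
  refine inB_identF_of_range (word := List.flatMap c ∘ word) (C := C)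
    ((flatMap_injective hn hn0 hc).comp hinj) ?_ (fun a ha ↦ ?_) fun g ↦ wordBall_mono ?_ (hC g)
  · refine (isRegular_congr fun w ↦ ⟨?_, ?_⟩).1 (isRegular_flatMap hreg c fun x ↦ by grind)
    · rintro ⟨_, ⟨g, rfl⟩, rfl⟩
      exact ⟨g, rfl⟩
    · rintro ⟨g, rfl⟩
      exact ⟨_, ⟨g, rfl⟩, rfl⟩
  · simpa [← Set.range_comp, Function.comp_def] using (hmul a ha).flatMap hn hn0
  · simpa [List.length_flatMap, hn] using
      Nat.mul_le_mul_left C (Nat.le_mul_of_pos_right _ (Nat.pos_of_ne_zero hn0))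

end Transfer

namespace BS

variable {p q : ℕ} [NeZero p] [q.AtLeastTwo]

/-- The word of the normal form of an element of `BS(p,q)`. -/
noncomputable def normalWord (g : BS p q) : List (Letter (BSBlock p q) q) :=
  ((BSNormalForm.valueEquiv p q).symm g).word

theorem normalWord_value (x : BSNormalForm p q) : normalWord x.value = x.word :=
  congrArg BSNormalForm.word ((BSNormalForm.valueEquiv p q).symm_apply_apply x)

theorem normalWord_injective : Function.Injective (normalWord (p := p) (q := q)) :=
  BSNormalForm.word_injective.comp (Equiv.injective _)

theorem isRegular_range_normalWord :
    Language.IsRegular (Set.range (normalWord (p := p) (q := q)) : Set (List (Letter _ q))) := by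
  have hrange : Set.range (normalWord (p := p) (q := q)) = Set.range BSNormalForm.word :=
    (BSNormalForm.valueEquiv p q).symm.surjective.range_comp _
  exact hrange ▸ BSNormalForm.isRegular_range_word

theorem isRegularRel_range_normalWord_mul_a :
    IsRegularRel (Set.range fun g : BS p q ↦ (normalWord g, normalWord (g * BS.a p q))) := by
  convert BSNormalForm.isRegularRel_range_word_shift (p := p) (q := q) 1 using 1
  rw [← (BSNormalForm.valueEquiv p q).surjective.range_comp]
  refine congrArg Set.range (funext fun x ↦ ?_)
  have hshift := normalWord_value (x.shift 1)
  rw [BSNormalForm.value_shift, zpow_one] at hshift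
  exact Prod.ext (normalWord_value x) hshift

theorem isRegularRel_range_normalWord_mul_t :
    IsRegularRel (Set.range fun g : BS p q ↦ (normalWord g, normalWord (g * BS.t p q))) := by
  convert BSNormalForm.isRegularRel_word_tStep (p := p) (q := q) using 1
  have hword {x y : BSNormalForm p q} (hxy : x.TStep y) :
      (normalWord x.value, normalWord (x.value * BS.t p q)) = (x.word, y.word) := by
    rw [← hxy.value_eq, normalWord_value, normalWord_value]
  ext w
  constructor
  · rintro ⟨g, rfl⟩
    obtain ⟨x, rfl⟩ := (BSNormalForm.valueEquiv p q).surjective g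
    obtain ⟨y, hxy⟩ := x.exists_tStep
    exact ⟨x, y, hxy, hword hxy⟩
  · rintro ⟨x, y, hxy, rfl⟩
    exact ⟨x.value, hword hxy⟩

theorem exists_mem_wordBall_length_normalWord (hpq : p < q) :
    ∃ C : ℕ, ∀ g : BS p q, g ∈ wordBall {BS.a p q, BS.t p q} (C * (normalWord g).length) := by
  obtain ⟨C, hC⟩ := BSNormalForm.exists_value_mem_wordBall (NeZero.pos p) hpq
  refine ⟨C, (BSNormalForm.valueEquiv p q).surjective.forall.2 fun x ↦ ?_⟩
  exact (normalWord_value x).symm ▸ hC x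

end BS

end CAG

open CAG in
/-- For `1 ≤ p < q`, the Baumslag–Solitar group `BS(p,q)` belongs to the class `ℬ_𝔦`,
where `𝔦(n) = n` is the identity function. -/
theorem BS_mem_classB_ident (p q : ℕ) (hp : 1 ≤ p) (hpq : p < q) :
    InB ({BS.a p q, BS.t p q} : Set (BS p q)) identF := by
  have : NeZero p := ⟨by lia⟩
  have : q.AtLeastTwo := ⟨by lia⟩
  have : Nontrivial (Alph {BS.a p q, BS.t p q}) :=
    ⟨⟨BS.a p q, .inl (.inl rfl)⟩, ⟨BS.t p q, .inl (.inr rfl)⟩,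
      fun h ↦ BSNormalForm.a_ne_t (congrArg Subtype.val h)⟩
  obtain ⟨C, hC⟩ := BS.exists_mem_wordBall_length_normalWord hpq
  refine inB_identF_of_finite_alphabet (Set.toFinite _) BS.normalWord_injective
    BS.isRegular_range_normalWord ?_ hC
  rintro _ (rfl | rfl)
  · exact BS.isRegularRel_range_normalWord_mul_a
  · exact BS.isRegularRel_range_normalWord_mul_t
end
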